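/- Let d = 2, ν > κ > 0 and γ > 1. There exists δ̄ > 0, depending only on γ, ν and κ, with the following property: for every δ ∈ (0, δ̄), every sufficiently small ε > 0 (smaller than a threshold depending only on γ, ν, κ), every T > 0 and every smooth initial data (ρ⁰, u⁰) with ρ⁰ > 0, there is a constant C, depending only on ε, ν, κ, γ, δ, T and (ρ⁰, u⁰), such that every smooth solution (ρ, u) of (QNS_ε) on [0,T] × T² with initial data (ρ⁰, u⁰) satisfies sup_{t∈(0,T)} ∫_{T²} ρ |w|^{2+2δ} dx ≤ C, where w = u + μ ∇(φ_ε(ρ)). -/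

import Mathlib

open MeasureTheory Real

noncomputable section

/-- Partial derivative of a scalar field in the coordinate direction `i`. -/
def pd {d : ℕ} (i : Fin d) (f : (Fin d → ℝ) → ℝ) (x : Fin d → ℝ) : ℝ :=
  fderiv ℝ f x (Pi.single i 1)

/-- Gradient of a scalar field. -/
def grad {d : ℕ} (f : (Fin d → ℝ) → ℝ) (x : Fin d → ℝ) : Fin d → ℝ :=
  fun i => pd i f x

/-- Divergence of a vector field. -/
def dvg {d : ℕ} (u : (Fin d → ℝ) → (Fin d → ℝ)) (x : Fin d → ℝ) : ℝ :=
  ∑ i, pd i (fun y => u y i) x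

/-- Row-wise divergence of a matrix field: `(dvgM M x) i = ∑ j, ∂_j M_{ij}`. -/
def dvgM {d : ℕ} (M : (Fin d → ℝ) → Fin d → Fin d → ℝ) (x : Fin d → ℝ) : Fin d → ℝ :=
  fun i => ∑ j, pd j (fun y => M y i j) x

/-- Hessian of a scalar field. -/
def hess {d : ℕ} (f : (Fin d → ℝ) → ℝ) (x : Fin d → ℝ) : Fin d → Fin d → ℝ :=
  fun i j => pd i (fun y => pd j f y) x

/-- Laplacian of a scalar field. -/
def lap {d : ℕ} (f : (Fin d → ℝ) → ℝ) (x : Fin d → ℝ) : ℝ :=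
  ∑ i, pd i (fun y => pd i f y) x

/-- Jacobian matrix of a vector field: `(jac u x) i j = ∂_j u_i`. -/
def jac {d : ℕ} (u : (Fin d → ℝ) → (Fin d → ℝ)) (x : Fin d → ℝ) : Fin d → Fin d → ℝ :=
  fun i j => pd j (fun y => u y i) x

/-- Symmetric part of the gradient of a vector field, `Du = (∇u + (∇u)ᵀ)/2`. -/
def symD {d : ℕ} (u : (Fin d → ℝ) → (Fin d → ℝ)) (x : Fin d → ℝ) : Fin d → Fin d → ℝ :=
  fun i j => (jac u x i j + jac u x j i) / 2

/-- Antisymmetric part of the gradient of a vector field, `Au = (∇u − (∇u)ᵀ)/2`. -/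
def antiD {d : ℕ} (u : (Fin d → ℝ) → (Fin d → ℝ)) (x : Fin d → ℝ) : Fin d → Fin d → ℝ :=
  fun i j => (jac u x i j - jac u x j i) / 2

/-- Tensor product of two vectors: `(a ⊗ b)_{ij} = a_i b_j`. -/
def tens {d : ℕ} (a b : Fin d → ℝ) : Fin d → Fin d → ℝ := fun i j => a i * b j

/-- ℤ^d-periodicity: a function of this kind descends to the torus `T^d = ℝ^d/ℤ^d`. -/
def SpacePeriodic {d : ℕ} {E : Type*} (f : (Fin d → ℝ) → E) : Prop :=
  ∀ x : Fin d → ℝ, ∀ n : Fin d → ℤ, f (x + fun i => (n i : ℝ)) = f x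

/-- Fundamental domain of the torus `T^d = ℝ^d/ℤ^d` (with its probability Lebesgue measure). -/
def unitBox (d : ℕ) : Set (Fin d → ℝ) := Set.Icc 0 1

/-- The approximating viscosity coefficient `h_ε(r) = r + ε r^{7/8} + ε r^γ`. -/
def hfun (ε γ r : ℝ) : ℝ := r + ε * r ^ ((7 : ℝ) / 8) + ε * r ^ γ

/-- `g_ε(r) = r h_ε'(r) − h_ε(r)`. -/
def gfun (ε γ r : ℝ) : ℝ := r * deriv (hfun ε γ) r - hfun ε γ r

/-- `λ(ε) = e^{−1/ε⁴}`. -/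
def lamfun (ε : ℝ) : ℝ := Real.exp (-1 / ε ^ 4)

/-- The damping coefficient `p̃_ε(r) = λ(ε)(r^{1/ε²} + r^{−1/ε²})`. -/
def ptil (ε r : ℝ) : ℝ := lamfun ε * (r ^ (1 / ε ^ 2) + r ^ (-(1 / ε ^ 2)))

/-- `μ = ν − √(ν² − κ²)`. -/
def muof (ν κ : ℝ) : ℝ := ν - Real.sqrt (ν ^ 2 - κ ^ 2)

/-- `p_ε` is an antiderivative on `(0,∞)` of `r ↦ μ p̃_ε(r) h_ε'(r) / r`. -/
def IsPeps (ε γ ν κ : ℝ) (P : ℝ → ℝ) : Prop :=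
  ∀ r : ℝ, 0 < r → HasDerivAt P (muof ν κ * ptil ε r * deriv (hfun ε γ) r / r) r

/-- `φ_ε` is a smooth function on `(0,∞)` with `r φ_ε'(r) = h_ε'(r)`. -/
def IsPhieps (ε γ : ℝ) (Φ : ℝ → ℝ) : Prop :=
  ContDiffOn ℝ (⊤ : ℕ∞) Φ (Set.Ioi 0) ∧ ∀ r : ℝ, 0 < r → r * deriv Φ r = deriv (hfun ε γ) r

/-- `f_ε` satisfies `r f_ε'(r) − f_ε(r) = p_ε(r)` on `(0,∞)`. -/
def IsFeps (P F : ℝ → ℝ) : Prop :=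
  (∀ r : ℝ, 0 < r → DifferentiableAt ℝ F r) ∧
  ∀ r : ℝ, 0 < r → r * deriv F r - F r = P r

/-- The vector field `∇( h_ε'(ρ) div(h_ε'(ρ) ∇√ρ) / √ρ )`; the capillarity term of (QNS_ε) is
`2 κ² ρ` times this field. -/
def Kvec {d : ℕ} (ε γ : ℝ) (ρ : (Fin d → ℝ) → ℝ) (x : Fin d → ℝ) : Fin d → ℝ :=
  grad (fun y => deriv (hfun ε γ) (ρ y) *
      dvg (fun z => deriv (hfun ε γ) (ρ z) • grad (fun w => Real.sqrt (ρ w)) z) y /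
      Real.sqrt (ρ y)) x

/-- A smooth solution of the approximating system (QNS_ε) on `(0,T) × T^d`:
a pair of `C^∞` functions on `[0,T] × T^d` with `ρ > 0` everywhere, satisfying the continuity
equation and the momentum equation pointwise. -/
def IsQNSSol (d : ℕ) (ε γ ν κ T : ℝ) (P : ℝ → ℝ)
    (ρ : ℝ → (Fin d → ℝ) → ℝ) (u : ℝ → (Fin d → ℝ) → (Fin d → ℝ)) : Prop :=
  ContDiffOn ℝ (⊤ : ℕ∞) (fun p : ℝ × (Fin d → ℝ) => ρ p.1 p.2) (Set.Icc 0 T ×ˢ Set.univ) ∧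
  ContDiffOn ℝ (⊤ : ℕ∞) (fun p : ℝ × (Fin d → ℝ) => u p.1 p.2) (Set.Icc 0 T ×ˢ Set.univ) ∧
  (∀ t x, 0 < ρ t x) ∧
  (∀ t, SpacePeriodic (ρ t)) ∧
  (∀ t, SpacePeriodic (u t)) ∧
  (∀ t ∈ Set.Ioo 0 T, ∀ x : Fin d → ℝ,
    deriv (fun s => ρ s x) t + dvg (fun y => ρ t y • u t y) x = 0) ∧
  (∀ t ∈ Set.Ioo 0 T, ∀ x : Fin d → ℝ, ∀ i : Fin d,
    deriv (fun s => ρ s x * u s x i) t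
      + dvgM (fun y i' j => ρ t y * u t y i' * u t y j) x i
      + grad (fun y => ρ t y ^ γ + P (ρ t y)) x i
      + ptil ε (ρ t x) * u t x i
    = 2 * ν * dvgM (fun y i' j => hfun ε γ (ρ t y) * symD (u t) y i' j) x i
      + 2 * ν * grad (fun y => gfun ε γ (ρ t y) * dvg (u t) y) x i
      + 2 * κ ^ 2 * ρ t x * Kvec ε γ (ρ t) x i)

set_option linter.unusedSimpArgs false

/-- Smooth scalar field on the plane. -/
def Sm (f : (Fin 2 → ℝ) → ℝ) : Prop := ContDiff ℝ (⊤ : ℕ∞) f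

/-- Smooth on `[0,T] × ℝ²`. -/
def STS (T : ℝ) (f : ℝ → (Fin 2 → ℝ) → ℝ) : Prop :=
  ContDiffOn ℝ (⊤ : ℕ∞) (fun p : ℝ × (Fin 2 → ℝ) => f p.1 p.2) (Set.Icc 0 T ×ˢ Set.univ)

lemma two_le_top : minSmoothness ℝ 2 ≤ ((⊤ : ℕ∞) : WithTop ℕ∞) := by
  simp only [minSmoothness_of_isRCLikeNormedField]
  exact WithTop.coe_le_coe.2 (le_top : (2 : ℕ∞) ≤ ⊤)

lemma Sm.diff {f : (Fin 2 → ℝ) → ℝ} (h : Sm f) (x) : DifferentiableAt ℝ f x :=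
  (ContDiff.differentiable h (by simp)) x

lemma Sm.cont {f : (Fin 2 → ℝ) → ℝ} (h : Sm f) : Continuous f := ContDiff.continuous h

lemma Sm.pd {f : (Fin 2 → ℝ) → ℝ} (h : Sm f) (i : Fin 2) : Sm (fun y => pd i f y) := by
  unfold Sm _root_.pd at *
  exact (h.fderiv_right (m := ((⊤ : ℕ∞) : WithTop ℕ∞)) (by simp)).clm_apply contDiff_const

lemma Sm.add {f g : (Fin 2 → ℝ) → ℝ} (hf : Sm f) (hg : Sm g) : Sm (fun y => f y + g y) :=
  ContDiff.add hf hg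

lemma Sm.sub {f g : (Fin 2 → ℝ) → ℝ} (hf : Sm f) (hg : Sm g) : Sm (fun y => f y - g y) :=
  ContDiff.sub hf hg

lemma Sm.mul {f g : (Fin 2 → ℝ) → ℝ} (hf : Sm f) (hg : Sm g) : Sm (fun y => f y * g y) :=
  ContDiff.mul hf hg

lemma Sm.const (c : ℝ) : Sm (fun _ => c) := contDiff_const

lemma Sm.rpow {f : (Fin 2 → ℝ) → ℝ} (hf : Sm f) (h0 : ∀ x, 0 < f x) (a : ℝ) :
    Sm (fun y => f y ^ a) :=
  ContDiff.rpow_const_of_ne hf (fun x => (h0 x).ne')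

lemma pd_add {f g : (Fin 2 → ℝ) → ℝ} (hf : Sm f) (hg : Sm g) (i : Fin 2) (x) :
    pd i (fun y => f y + g y) x = pd i f x + pd i g x := by
  unfold pd; rw [fderiv_fun_add (hf.diff x) (hg.diff x)]; rfl

lemma pd_sub {f g : (Fin 2 → ℝ) → ℝ} (hf : Sm f) (hg : Sm g) (i : Fin 2) (x) :
    pd i (fun y => f y - g y) x = pd i f x - pd i g x := by
  unfold pd; rw [fderiv_fun_sub (hf.diff x) (hg.diff x)]; rfl

lemma pd_mul {f g : (Fin 2 → ℝ) → ℝ} (hf : Sm f) (hg : Sm g) (i : Fin 2) (x) :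
    pd i (fun y => f y * g y) x = pd i f x * g x + f x * pd i g x := by
  unfold pd; rw [fderiv_fun_mul (hf.diff x) (hg.diff x)]; simp; ring

lemma pd_const (c : ℝ) (i : Fin 2) (x) : pd i (fun _ => c) x = 0 := by
  unfold pd; simp

lemma pd_comp {G : ℝ → ℝ} {g' : ℝ} {f : (Fin 2 → ℝ) → ℝ} (x) (hG : HasDerivAt G g' (f x))
    (hf : Sm f) (i : Fin 2) :
    pd i (fun y => G (f y)) x = g' * pd i f x := by
  unfold pd
  have := (hG.comp_hasFDerivAt x (hf.diff x).hasFDerivAt).fderiv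
  have h2 : (fun y => G (f y)) = G ∘ f := rfl
  rw [h2, this]; simp

lemma pd_comm {f : (Fin 2 → ℝ) → ℝ} (h : Sm f) (i j : Fin 2) (x) :
    pd i (fun y => pd j f y) x = pd j (fun y => pd i f y) x := by
  have hs : IsSymmSndFDerivAt ℝ f x :=
    ContDiffAt.isSymmSndFDerivAt (ContDiff.contDiffAt h) two_le_top
  have hd : DifferentiableAt ℝ (fderiv ℝ f) x :=
    ((ContDiff.fderiv_right (m := ((⊤ : ℕ∞) : WithTop ℕ∞)) h (by simp)).differentiable
      (by simp)) x
  have key : ∀ v w : Fin 2 → ℝ, fderiv ℝ (fun y => fderiv ℝ f y v) x w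
      = fderiv ℝ (fderiv ℝ f) x w v := by
    intro v w
    rw [fderiv_clm_apply hd (differentiableAt_const v)]
    simp
  unfold pd
  rw [key, key]
  exact hs _ _

lemma pd_periodic {f : (Fin 2 → ℝ) → ℝ} (h : SpacePeriodic f) (i : Fin 2) :
    SpacePeriodic (fun y => pd i f y) := by
  intro x n
  unfold pd
  have h2 : f = fun y => f (y + fun i => (n i : ℝ)) := by
    funext y; exact (h y n).symm
  conv_rhs => rw [h2]
  show fderiv ℝ f _ _ = fderiv ℝ (fun y => f (y + fun i => (n i : ℝ))) x _
  rw [fderiv_comp_add_right]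

section spacetime
variable {T : ℝ}

lemma uniqueDiff_slab (hT : 0 < T) :
    UniqueDiffOn ℝ (Set.Icc 0 T ×ˢ (Set.univ : Set (Fin 2 → ℝ))) :=
  (uniqueDiffOn_Icc hT).prod uniqueDiffOn_univ

lemma STS.sm {f : ℝ → (Fin 2 → ℝ) → ℝ} (hf : STS T f) {t : ℝ} (ht : t ∈ Set.Icc 0 T) :
    Sm (f t) := by
  have h1 : ContDiff ℝ (⊤ : ℕ∞) (fun x : Fin 2 → ℝ => (t, x)) :=
    contDiff_const.prodMk contDiff_id
  have := ContDiffOn.comp (s := Set.univ) hf h1.contDiffOn (fun x _ => ⟨ht, Set.mem_univ _⟩)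
  exact contDiffOn_univ.1 this

lemma STS.add {f g : ℝ → (Fin 2 → ℝ) → ℝ} (hf : STS T f) (hg : STS T g) :
    STS T (fun t x => f t x + g t x) := ContDiffOn.add hf hg

lemma STS.mul {f g : ℝ → (Fin 2 → ℝ) → ℝ} (hf : STS T f) (hg : STS T g) :
    STS T (fun t x => f t x * g t x) := ContDiffOn.mul hf hg

lemma STS.const (c : ℝ) : STS T (fun _ _ => c) := contDiffOn_const

lemma STS.rpow {f : ℝ → (Fin 2 → ℝ) → ℝ} (hf : STS T f) (h0 : ∀ t x, 0 < f t x) (a : ℝ) :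
    STS T (fun t x => f t x ^ a) :=
  ContDiffOn.rpow_const_of_ne hf (fun p _ => (h0 p.1 p.2).ne')

lemma STS.comp {f : ℝ → (Fin 2 → ℝ) → ℝ} (hf : STS T f) (h0 : ∀ t x, 0 < f t x)
    {G : ℝ → ℝ} (hG : ContDiffOn ℝ (⊤ : ℕ∞) G (Set.Ioi 0)) :
    STS T (fun t x => G (f t x)) :=
  ContDiffOn.comp hG hf (fun p _ => h0 p.1 p.2)

lemma STS.pd (hT : 0 < T) {f : ℝ → (Fin 2 → ℝ) → ℝ} (hf : STS T f) (i : Fin 2) :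
    STS T (fun t x => pd i (f t) x) := by
  have hu := uniqueDiff_slab hT
  have h1 := ContDiffOn.fderivWithin (m := ((⊤ : ℕ∞) : WithTop ℕ∞)) hf hu (by simp)
  have h2 := h1.clm_apply (contDiffOn_const (c := ((0 : ℝ), (Pi.single i 1 : Fin 2 → ℝ))))
  refine h2.congr ?_
  rintro ⟨t, x⟩ ⟨ht, -⟩
  have hd : DifferentiableWithinAt ℝ (fun p : ℝ × (Fin 2 → ℝ) => f p.1 p.2)
    (Set.Icc 0 T ×ˢ Set.univ) (t, x) :=
      (ContDiffOn.differentiableOn hf (by simp)) (t, x) ⟨ht, Set.mem_univ _⟩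
  have h3 : HasFDerivAt (fun y : Fin 2 → ℝ => (t, y)) (ContinuousLinearMap.inr ℝ ℝ (Fin 2 → ℝ)) x :=
    hasFDerivAt_prodMk_right t x
  have h4 := HasFDerivWithinAt.comp (t := Set.Icc 0 T ×ˢ Set.univ) (s := Set.univ) x
    hd.hasFDerivWithinAt h3.hasFDerivWithinAt (fun y _ => ⟨ht, Set.mem_univ _⟩)
  have h5 : HasFDerivAt (f t) _ x := (hasFDerivWithinAt_univ.1 h4)
  simp only [_root_.pd]
  rw [h5.fderiv]
  simp

lemma open_slab : IsOpen (Set.Ioo 0 T ×ˢ (Set.univ : Set (Fin 2 → ℝ))) :=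
  isOpen_Ioo.prod isOpen_univ

lemma STS.contDiffAt {f : ℝ → (Fin 2 → ℝ) → ℝ} (hf : STS T f) {t : ℝ} (ht : t ∈ Set.Ioo 0 T)
    (x : Fin 2 → ℝ) :
    ContDiffAt ℝ (⊤ : ℕ∞) (fun p : ℝ × (Fin 2 → ℝ) => f p.1 p.2) (t, x) := by
  have : ContDiffOn ℝ (⊤ : ℕ∞) (fun p : ℝ × (Fin 2 → ℝ) => f p.1 p.2)
    (Set.Ioo 0 T ×ˢ Set.univ) :=
      ContDiffOn.mono hf (Set.prod_mono Set.Ioo_subset_Icc_self le_rfl)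
  exact this.contDiffAt (open_slab.mem_nhds ⟨ht, Set.mem_univ _⟩)

lemma STS.hasDerivAt' {f : ℝ → (Fin 2 → ℝ) → ℝ} (hf : STS T f) {t : ℝ} (ht : t ∈ Set.Ioo 0 T)
    (x : Fin 2 → ℝ) :
    HasDerivAt (fun s => f s x)
      (fderiv ℝ (fun p : ℝ × (Fin 2 → ℝ) => f p.1 p.2) (t, x) (1, 0)) t := by
  have hd := ((hf.contDiffAt ht x).differentiableAt (by simp)).hasFDerivAt
  have h3 : HasFDerivAt (fun s : ℝ => (s, x)) (ContinuousLinearMap.inl ℝ ℝ (Fin 2 → ℝ)) t :=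
    hasFDerivAt_prodMk_left t x
  have h4 := HasFDerivAt.comp t hd h3
  have h5 := h4.hasDerivAt
  simp only [ContinuousLinearMap.comp_apply, ContinuousLinearMap.inl_apply] at h5
  exact h5

lemma STS.hasDerivAt {f : ℝ → (Fin 2 → ℝ) → ℝ} (hf : STS T f) {t : ℝ} (ht : t ∈ Set.Ioo 0 T)
    (x : Fin 2 → ℝ) :
    HasDerivAt (fun s => f s x) (deriv (fun s => f s x) t) t :=
  (hf.hasDerivAt' ht x).differentiableAt.hasDerivAt

lemma STS.contOn_deriv {f : ℝ → (Fin 2 → ℝ) → ℝ} (hf : STS T f) :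
    ContinuousOn (fun p : ℝ × (Fin 2 → ℝ) => deriv (fun s => f s p.2) p.1)
      (Set.Ioo 0 T ×ˢ Set.univ) := by
  have h0 : ContDiffOn ℝ (⊤ : ℕ∞) (fun p : ℝ × (Fin 2 → ℝ) => f p.1 p.2)
    (Set.Ioo 0 T ×ˢ Set.univ) :=
      ContDiffOn.mono hf (Set.prod_mono Set.Ioo_subset_Icc_self le_rfl)
  have h1 := h0.fderiv_of_isOpen (m := ((⊤ : ℕ∞) : WithTop ℕ∞)) open_slab (by simp)
  have h2 := h1.clm_apply (contDiffOn_const (c := ((1 : ℝ), (0 : Fin 2 → ℝ))))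
  refine h2.continuousOn.congr ?_
  rintro ⟨t, x⟩ ⟨ht, -⟩
  exact (hf.hasDerivAt' ht x).deriv

lemma STS.comm {f : ℝ → (Fin 2 → ℝ) → ℝ} (hf : STS T f) {t : ℝ}
    (ht : t ∈ Set.Ioo 0 T) (x : Fin 2 → ℝ) (i : Fin 2) :
    HasDerivAt (fun s => _root_.pd i (f s) x)
      (_root_.pd i (fun y => deriv (fun s => f s y) t) x) t := by
  set F := fun p : ℝ × (Fin 2 → ℝ) => f p.1 p.2 with hF
  have hc := hf.contDiffAt ht x
  have hs : IsSymmSndFDerivAt ℝ F (t, x) := hc.isSymmSndFDerivAt two_le_top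
  have hd : DifferentiableAt ℝ (fderiv ℝ F) (t, x) :=
    (hc.fderiv_right (m := ((⊤ : ℕ∞) : WithTop ℕ∞)) (by simp)).differentiableAt (by simp)
  -- formula for pd on the interior
  have hpd : ∀ s ∈ Set.Ioo 0 T, _root_.pd i (f s) x = fderiv ℝ F (s, x) (0, Pi.single i 1) := by
    intro s hs'
    have hd' := ((hf.contDiffAt hs' x).differentiableAt (by simp)).hasFDerivAt
    have h3 : HasFDerivAt (fun y : Fin 2 → ℝ => (s, y))
      (ContinuousLinearMap.inr ℝ ℝ (Fin 2 → ℝ)) x := hasFDerivAt_prodMk_right s x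
    have h5 : HasFDerivAt (f s) _ x :=
      HasFDerivAt.comp (g := fun p : ℝ × (Fin 2 → ℝ) => f p.1 p.2) x hd' h3
    simp only [_root_.pd]
    rw [h5.fderiv]; simp [hF]
  have hdt : (fun y => deriv (fun s => f s y) t) = fun y => fderiv ℝ F (t, y) (1, 0) := by
    funext y; exact (hf.hasDerivAt' ht y).deriv
  have hA : HasDerivAt (fun s => fderiv ℝ F (s, x) (0, Pi.single i 1))
      (fderiv ℝ (fderiv ℝ F) (t, x) (1, 0) (0, Pi.single i 1)) t := by
    have h3 : HasFDerivAt (fun s : ℝ => (s, x)) (ContinuousLinearMap.inl ℝ ℝ (Fin 2 → ℝ)) t :=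
      hasFDerivAt_prodMk_left t x
    have h4 := (HasFDerivAt.comp t hd.hasFDerivAt h3).clm_apply
      (hasFDerivAt_const ((0 : ℝ), (Pi.single i 1 : Fin 2 → ℝ)) t)
    have h5 := h4.hasDerivAt
    simpa using h5
  have hB : HasFDerivAt (fun y : Fin 2 → ℝ => fderiv ℝ F (t, y) (1, 0)) _ x :=
    (HasFDerivAt.comp x hd.hasFDerivAt
      (hasFDerivAt_prodMk_right t x : HasFDerivAt (fun y : Fin 2 → ℝ => (t, y))
      (ContinuousLinearMap.inr ℝ ℝ (Fin 2 → ℝ)) x)).clm_apply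
      (hasFDerivAt_const ((1 : ℝ), (0 : Fin 2 → ℝ)) x)
  have hval : _root_.pd i (fun y => deriv (fun s => f s y) t) x
      = fderiv ℝ (fderiv ℝ F) (t, x) (1, 0) (0, Pi.single i 1) := by
    rw [hdt]
    simp only [_root_.pd]
    rw [hB.fderiv, hs (1, 0) (0, Pi.single i 1)]
    simp
  rw [hval]
  refine hA.congr_of_eventuallyEq ?_
  filter_upwards [isOpen_Ioo.mem_nhds ht] with s hs' using hpd s hs'

lemma STS.contInt (hT : 0 < T) {f : ℝ → (Fin 2 → ℝ) → ℝ} (hf : STS T f) :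
    ContinuousOn (fun t => ∫ x in unitBox 2, f t x) (Set.Icc 0 T) := by
  have h1 : Continuous (fun p : ℝ × (Fin 2 → ℝ) => f (Set.projIcc 0 T hT.le p.1) p.2) := by
    have hc := ContDiffOn.continuousOn hf
    have h2 : Continuous (fun p : ℝ × (Fin 2 → ℝ) =>
      (((Set.projIcc 0 T hT.le p.1 : Set.Icc 0 T) : ℝ), p.2)) := by fun_prop
    exact hc.comp_continuous h2 (fun p => ⟨(Set.projIcc 0 T hT.le p.1).2, Set.mem_univ _⟩)
  have h2 := continuous_parametric_integral_of_continuous (μ := volume)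
    (f := fun (t : ℝ) (x : Fin 2 → ℝ) => f (Set.projIcc 0 T hT.le t) x) h1
    (isCompact_Icc : IsCompact (unitBox 2))
  refine h2.continuousOn.congr ?_
  intro t ht
  simp only [Set.projIcc_of_mem hT.le ht, unitBox]

lemma int_cont {f : (Fin 2 → ℝ) → ℝ} (hf : Continuous f) : IntegrableOn f (unitBox 2) :=
  hf.continuousOn.integrableOn_compact isCompact_Icc

lemma STS.derivInt {f : ℝ → (Fin 2 → ℝ) → ℝ} (hf : STS T f) {t : ℝ}
    (ht : t ∈ Set.Ioo 0 T) :
    IntegrableOn (fun x => deriv (fun s => f s x) t) (unitBox 2) ∧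
    HasDerivAt (fun t => ∫ x in unitBox 2, f t x)
      (∫ x in unitBox 2, deriv (fun s => f s x) t) t := by
  have hc := hf.contOn_deriv
  obtain ⟨a, b, htab, hab, habs⟩ : ∃ a b, t ∈ Set.Ioo a b ∧ Set.Icc a b ⊆ Set.Ioo 0 T ∧ a < b := by
    refine ⟨t / 2, (t + T) / 2, ⟨?_, ?_⟩, ?_, ?_⟩
    · linarith [ht.1]
    · linarith [ht.2]
    · intro s hs; exact ⟨by linarith [ht.1, hs.1], by linarith [ht.2, hs.2]⟩
    · linarith [ht.1, ht.2]
  have hcpt : IsCompact (Set.Icc a b ×ˢ unitBox 2) := isCompact_Icc.prod isCompact_Icc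
  obtain ⟨C, hC⟩ := hcpt.exists_bound_of_continuousOn
    (hc.mono (Set.prod_mono hab (Set.subset_univ _)))
  refine hasDerivAt_integral_of_dominated_loc_of_deriv_le (μ := volume.restrict (unitBox 2))
    (F := f) (F' := fun t x => deriv (fun s => f s x) t) (bound := fun _ => C)
    (s := Set.Icc a b) (Icc_mem_nhds htab.1 htab.2) ?_ ?_ ?_ ?_ ?_ ?_
  · filter_upwards [isOpen_Ioo.mem_nhds ht] with s hs
    exact (hf.sm (Set.Ioo_subset_Icc_self hs)).cont.aestronglyMeasurable
  · exact int_cont (hf.sm (Set.Ioo_subset_Icc_self ht)).cont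
  · have : Continuous (fun x : Fin 2 → ℝ => deriv (fun s => f s x) t) :=
      hc.comp_continuous (f := fun x : Fin 2 → ℝ => (t, x)) (by fun_prop)
        (fun x => ⟨ht, Set.mem_univ _⟩)
    exact this.aestronglyMeasurable
  · refine (ae_restrict_iff' measurableSet_Icc).2 (Filter.Eventually.of_forall ?_)
    intro x hx s hs
    exact hC (s, x) ⟨hs, hx⟩
  · exact int_cont continuous_const
  · exact Filter.Eventually.of_forall (fun x s hs => hf.hasDerivAt (hab hs) x)

lemma int_div_zero {F : Fin 2 → (Fin 2 → ℝ) → ℝ} (hF : ∀ j, Sm (F j))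
    (hp : ∀ j, SpacePeriodic (F j)) :
    ∫ x in unitBox 2, ∑ j, pd j (F j) x = 0 := by
  have hle : (0 : Fin 2 → ℝ) ≤ 1 := zero_le_one
  have hcont : Continuous (fun x => ∑ j, pd j (F j) x) :=
    continuous_finsetSum _ (fun j _ => ((hF j).pd j).cont)
  have := integral_divergence_of_hasFDerivAt_off_countable' (0 : Fin 2 → ℝ) 1 hle F
    (fun j x => fderiv ℝ (F j) x) ∅ Set.countable_empty (fun j => (hF j).cont.continuousOn)
    (fun x _ j => ((hF j).diff x).hasFDerivAt) (int_cont hcont)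
  unfold unitBox
  unfold pd
  rw [this]
  refine Finset.sum_eq_zero (fun j _ => ?_)
  rw [sub_eq_zero]
  congr 1
  funext x
  have h1 := hp j (j.insertNth ((0 : Fin 2 → ℝ) j) x) (Pi.single j 1)
  rw [← h1]
  congr 1
  funext k
  rcases Fin.eq_self_or_eq_succAbove j k with h | ⟨m, h⟩
  · subst h; simp
  · subst h; simp

lemma evol (hT : 0 < T) {e : ℝ → (Fin 2 → ℝ) → ℝ} (he : STS T e)
    {B : ℝ → (Fin 2 → ℝ) → ℝ} {K : ℝ} (hBc : ∀ t ∈ Set.Ioo 0 T, Continuous (B t))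
    (hB : ∀ t ∈ Set.Ioo 0 T, ∫ x in unitBox 2, B t x ≤ K)
    (H : ∀ t ∈ Set.Ioo 0 T, ∃ F : Fin 2 → (Fin 2 → ℝ) → ℝ, (∀ j, Sm (F j)) ∧
      (∀ j, SpacePeriodic (F j)) ∧
      ∀ x, deriv (fun s => e s x) t ≤ ∑ j, pd j (F j) x + B t x) :
    ∀ t ∈ Set.Icc 0 T, ∫ x in unitBox 2, e t x ≤ (∫ x in unitBox 2, e 0 x) + K * t := by
  intro t ht
  have hconv := (convex_Icc (0 : ℝ) T).image_sub_le_mul_sub_of_deriv_le (he.contInt hT)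
    (C := K) ?_ ?_ 0 ⟨le_rfl, hT.le⟩ t ht ht.1
  · linarith
  · rw [interior_Icc]
    intro s hs
    exact (he.derivInt hs).2.differentiableAt.differentiableWithinAt
  · rw [interior_Icc]
    intro s hs
    rw [(he.derivInt hs).2.deriv]
    obtain ⟨F, hF, hp, hle⟩ := H s hs
    have hcont : Continuous (fun x => ∑ j, pd j (F j) x) :=
      continuous_finsetSum _ (fun j _ => ((hF j).pd j).cont)
    calc ∫ x in unitBox 2, deriv (fun s => e s x) s
        ≤ ∫ x in unitBox 2, (∑ j, pd j (F j) x + B s x) := by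
          apply integral_mono (he.derivInt hs).1
          · exact (int_cont hcont).add (int_cont (hBc s hs))
          · exact hle
      _ = (∫ x in unitBox 2, ∑ j, pd j (F j) x) + ∫ x in unitBox 2, B s x :=
          integral_add (int_cont hcont) (int_cont (hBc s hs))
      _ ≤ K := by rw [int_div_zero hF hp]; linarith [hB s hs]

end spacetime

lemma Sm.div_const {f : (Fin 2 → ℝ) → ℝ} (hf : Sm f) (c : ℝ) : Sm (fun y => f y / c) :=
  ContDiff.div_const hf c

lemma pd_div_const {f : (Fin 2 → ℝ) → ℝ} (hf : Sm f) (c : ℝ) (i : Fin 2) (x) :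
    pd i (fun y => f y / c) x = pd i f x / c := by
  have := pd_mul hf (Sm.const c⁻¹) i x
  simp only [div_eq_mul_inv]
  rw [this, pd_const]; ring

/-- The stress tensor of the effective velocity. -/
def stress (ν μ : ℝ) (H G : (Fin 2 → ℝ) → ℝ) (W : Fin 2 → (Fin 2 → ℝ) → ℝ) (i j : Fin 2)
    (y : Fin 2 → ℝ) : ℝ :=
  H y * (ν * pd j (W i) y + (ν - μ) * pd i (W j) y) +
    (if i = j then (2 * ν - μ) else 0) * (G y * (pd 0 (W 0) y + pd 1 (W 1) y))

lemma weq (ν κ μ : ℝ) (hμ : μ ^ 2 - 2 * ν * μ + κ ^ 2 = 0)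
    (R H Q : (Fin 2 → ℝ) → ℝ) (U V : Fin 2 → (Fin 2 → ℝ) → ℝ)
    (hR : Sm R) (hH : Sm H) (hQ : Sm Q) (hU : ∀ i, Sm (U i)) (hV : ∀ i, Sm (V i))
    (hHV : ∀ i y, pd i H y = R y * V i y) (hQV : ∀ i y, Q y * pd i R y = R y * V i y)
    (hsym : ∀ i j y, pd i (V j) y = pd j (V i) y) (x : Fin 2 → ℝ) (i : Fin 2)
    (rt ut pg pt : ℝ)
    (hcont : rt + ∑ j, pd j (fun y => R y * U j y) x = 0)
    (hmom : rt * U i x + R x * ut + ∑ j, pd j (fun y => R y * U i y * U j y) x + pg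
        + pt * (U i x + μ * V i x)
      = 2 * ν * ∑ j, pd j (fun y => H y * ((pd j (U i) y + pd i (U j) y) / 2)) x
        + 2 * ν * pd i (fun y => (R y * Q y - H y) * (∑ k, pd k (U k) y)) x
        + κ ^ 2 * R x * pd i (fun y => Q y * (∑ k, pd k (V k) y) + (∑ k, V k y * V k y) / 2) x) :
    R x * (ut + μ * (- pd i (fun y => Q y * (∑ k, pd k (U k) y) + ∑ k, U k y * V k y) x))
      + R x * ∑ j, U j x * pd j (fun y => U i y + μ * V i y) x + pg
      + pt * (U i x + μ * V i x)
    = ∑ j, pd j (stress ν μ H (fun y => R y * Q y - H y) (fun k y => U k y + μ * V k y) i j) x := by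
  have hs1 : ∀ i j k, pd k (fun y => pd i (V j) y) x = pd k (fun y => pd j (V i) y) x := by
    intro i j k
    congr 1; funext y; exact hsym i j y
  have hcU : ∀ i j k, pd i (fun y => pd j (U k) y) x = pd j (fun y => pd i (U k) y) x :=
    fun i j k => pd_comm (hU k) i j x
  have hcV : ∀ i j k, pd i (fun y => pd j (V k) y) x = pd j (fun y => pd i (V k) y) x :=
    fun i j k => pd_comm (hV k) i j x
  have e1 := hsym 0 1 x
  have e2 : pd 0 (pd 0 (V 1)) x = pd 0 (pd 1 (V 0)) x := hs1 0 1 0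
  have e3 : pd 1 (pd 0 (V 1)) x = pd 1 (pd 1 (V 0)) x := hs1 0 1 1
  have c1 : pd 0 (pd 1 (U 0)) x = pd 1 (pd 0 (U 0)) x := hcU 0 1 0
  have c2 : pd 0 (pd 1 (U 1)) x = pd 1 (pd 0 (U 1)) x := hcU 0 1 1
  have c3 : pd 0 (pd 1 (V 0)) x = pd 1 (pd 0 (V 0)) x := hcV 0 1 0
  have c4 : pd 0 (pd 1 (V 1)) x = pd 1 (pd 0 (V 1)) x := hcV 0 1 1
  have q0 : pd 0 R x * Q x = R x * V 0 x := by rw [mul_comm]; exact hQV 0 x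
  have q1 : pd 1 R x * Q x = R x * V 1 x := by rw [mul_comm]; exact hQV 1 x
  unfold stress
  fin_cases i
  · simp (maxDischargeDepth := 12) [Fin.sum_univ_two, pd_add, pd_sub, pd_mul, pd_div_const,
      pd_const, Sm.add, Sm.sub, Sm.mul, Sm.div_const, Sm.const, Sm.pd, hR, hH, hQ, hU, hV,
      hHV] at hcont hmom ⊢
    simp only [e1, e2, e3, c1, c2, c3, c4, q0, q1] at hmom ⊢
    linear_combination hmom - U 0 x * hcont + R x * (pd 0 Q x * (pd 0 (V 0) x + pd 1 (V 1) x)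
      + Q x * (pd 0 (pd 0 (V 0)) x + pd 1 (pd 1 (V 0)) x)
      + V 0 x * pd 0 (V 0) x + V 1 x * pd 1 (V 0) x) * hμ
  · simp (maxDischargeDepth := 12) [Fin.sum_univ_two, pd_add, pd_sub, pd_mul, pd_div_const,
      pd_const, Sm.add, Sm.sub, Sm.mul, Sm.div_const, Sm.const, Sm.pd, hR, hH, hQ, hU, hV,
      hHV] at hcont hmom ⊢
    simp only [e1, e2, e3, c1, c2, c3, c4, q0, q1] at hmom ⊢
    linear_combination hmom - U 1 x * hcont + R x * (pd 1 Q x * (pd 0 (V 0) x + pd 1 (V 1) x)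
      + Q x * (pd 1 (pd 0 (V 0)) x + pd 1 (pd 1 (V 1)) x)
      + V 0 x * pd 1 (V 0) x + V 1 x * pd 1 (V 1) x) * hμ

/-- Explicit derivative of `h_ε`. -/
def qf (ε γ r : ℝ) : ℝ :=
  1 + ε * ((7 : ℝ) / 8 * r ^ ((7 : ℝ) / 8 - 1)) + ε * (γ * r ^ (γ - 1))

lemma hfun_hasDeriv (ε γ : ℝ) {r : ℝ} (hr : 0 < r) : HasDerivAt (hfun ε γ) (qf ε γ r) r := by
  have h1 := Real.hasDerivAt_rpow_const (x := r) (p := (7 : ℝ) / 8) (Or.inl hr.ne')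
  have h2 := Real.hasDerivAt_rpow_const (x := r) (p := γ) (Or.inl hr.ne')
  exact ((hasDerivAt_id r).add (h1.const_mul ε)).add (h2.const_mul ε)

lemma deriv_hfun (ε γ : ℝ) {r : ℝ} (hr : 0 < r) : deriv (hfun ε γ) r = qf ε γ r :=
  (hfun_hasDeriv ε γ hr).deriv


lemma sm_H {R : (Fin 2 → ℝ) → ℝ} (hR : Sm R) (h0 : ∀ x, 0 < R x)
    (ε γ : ℝ) : Sm (fun y => hfun ε γ (R y)) :=
  (hR.add ((Sm.const ε).mul (hR.rpow h0 _))).add ((Sm.const ε).mul (hR.rpow h0 _))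

lemma sm_Q {R : (Fin 2 → ℝ) → ℝ} (hR : Sm R) (h0 : ∀ x, 0 < R x)
    (ε γ : ℝ) : Sm (fun y => deriv (hfun ε γ) (R y)) := by
  have : (fun y => deriv (hfun ε γ) (R y)) = fun y => qf ε γ (R y) := by
    funext y; exact deriv_hfun ε γ (h0 y)
  rw [this]
  exact ((Sm.const 1).add ((Sm.const ε).mul ((Sm.const _).mul (hR.rpow h0 _)))).add
    ((Sm.const ε).mul ((Sm.const _).mul (hR.rpow h0 _)))

lemma sm_Phi {R : (Fin 2 → ℝ) → ℝ} (hR : Sm R) (h0 : ∀ x, 0 < R x)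
    {Φ : ℝ → ℝ} (hΦ : ContDiffOn ℝ (⊤ : ℕ∞) Φ (Set.Ioi 0)) :
    Sm (fun y => Φ (R y)) := by
  have := ContDiffOn.comp (s := Set.univ) hΦ (ContDiff.contDiffOn hR) (fun x _ => h0 x)
  exact contDiffOn_univ.1 this

lemma pd_H {R : (Fin 2 → ℝ) → ℝ} (hR : Sm R) (h0 : ∀ x, 0 < R x)
    (ε γ : ℝ) (i x) :
    pd i (fun y => hfun ε γ (R y)) x = deriv (hfun ε γ) (R x) * pd i R x := by
  rw [deriv_hfun ε γ (h0 x)]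
  exact pd_comp x (hfun_hasDeriv ε γ (h0 x)) hR i

lemma pd_Phi {R : (Fin 2 → ℝ) → ℝ} (hR : Sm R) (h0 : ∀ x, 0 < R x)
    {ε γ : ℝ} {Φ : ℝ → ℝ} (hΦ : IsPhieps ε γ Φ) (i x) :
    R x * pd i (fun y => Φ (R y)) x = deriv (hfun ε γ) (R x) * pd i R x := by
  have hd : HasDerivAt Φ (deriv Φ (R x)) (R x) :=
    ((hΦ.1.differentiableOn (by simp)).differentiableAt (Ioi_mem_nhds (h0 x))).hasDerivAt
  rw [pd_comp x hd hR i, ← hΦ.2 _ (h0 x)]; ring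

lemma Kvec_eq {R : (Fin 2 → ℝ) → ℝ} (hR : Sm R) (h0 : ∀ x, 0 < R x)
    {ε γ : ℝ} {Φ : ℝ → ℝ} (hΦ : IsPhieps ε γ Φ) (x : Fin 2 → ℝ) (i : Fin 2) :
    Kvec ε γ R x i = 1 / 2 * pd i (fun y => deriv (hfun ε γ) (R y) *
      (∑ k, pd k (fun z => pd k (fun z' => Φ (R z')) z) y) +
      (∑ k, pd k (fun z' => Φ (R z')) y * pd k (fun z' => Φ (R z')) y) / 2) x := by
  set V : Fin 2 → (Fin 2 → ℝ) → ℝ := fun k z => pd k (fun z' => Φ (R z')) z with hV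
  have hVs : ∀ k, Sm (V k) := fun k => (sm_Phi hR h0 hΦ.1).pd k
  have hsq : Sm (fun y => √(R y)) := ContDiff.sqrt hR (fun x => (h0 x).ne')
  have hpsq : ∀ k z, pd k (fun y => √(R y)) z = 1 / (2 * √(R z)) * pd k R z := fun k z =>
    pd_comp z (Real.hasDerivAt_sqrt (h0 z).ne') hR k
  have hpV : ∀ k z, R z * V k z = deriv (hfun ε γ) (R z) * pd k R z := fun k z =>
    pd_Phi hR h0 hΦ k z
  have hfield : ∀ k z, deriv (hfun ε γ) (R z) * pd k (fun y => √(R y)) z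
      = (√(R z) * V k z) / 2 := by
    intro k z
    have hp := Real.sqrt_pos.2 (h0 z)
    have hsqr := Real.mul_self_sqrt (h0 z).le
    have := hpV k z
    rw [hpsq]
    field_simp
    rw [← this, ← hsqr]; rw [Real.sqrt_mul_self hp.le]; ring
  have hfun_eq : (fun y => deriv (hfun ε γ) (R y) *
      dvg (fun z => deriv (hfun ε γ) (R z) • grad (fun w => Real.sqrt (R w)) z) y /
      Real.sqrt (R y)) = fun y => 1 / 2 * (deriv (hfun ε γ) (R y) *
      (∑ k, pd k (V k) y) + (∑ k, V k y * V k y) / 2) := by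
    funext y
    have hp := Real.sqrt_pos.2 (h0 y)
    have hsqr := Real.mul_self_sqrt (h0 y).le
    have hd : dvg (fun z => deriv (hfun ε γ) (R z) • grad (fun w => Real.sqrt (R w)) z) y
        = ∑ k, pd k (fun z => (√(R z) * V k z) / 2) y := by
      unfold dvg
      refine Finset.sum_congr rfl (fun k _ => ?_)
      congr 1
      funext z
      exact hfield k z
    rw [hd]
    simp only [pd_div_const (hsq.mul (hVs _)), pd_mul hsq (hVs _), hpsq, Fin.sum_univ_two]
    have a0 := hpV 0 y
    have a1 := hpV 1 y
    have hR' := h0 y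
    rw [div_eq_iff hp.ne']
    have e : ∀ k, deriv (hfun ε γ) (R y) * (1 / (2 * √(R y)) * pd k R y * V k y)
        = √(R y) * V k y * V k y / 2 := by
      intro k
      have := hpV k y
      field_simp
      rw [Real.sq_sqrt hR'.le]
      linear_combination (-V k y) * this
    linear_combination 1 / 2 * e 0 + 1 / 2 * e 1
  have hsm : Sm (fun y => deriv (hfun ε γ) (R y) *
      (∑ k, pd k (V k) y) + (∑ k, V k y * V k y) / 2) := by
    simp only [Fin.sum_univ_two]
    exact ((sm_Q hR h0 ε γ).mul (((hVs 0).pd 0).add ((hVs 1).pd 1))).add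
      ((((hVs 0).mul (hVs 0)).add ((hVs 1).mul (hVs 1))).div_const 2)
  unfold Kvec
  rw [hfun_eq]
  unfold grad
  rw [pd_mul (Sm.const (1 / 2)) hsm, pd_const]
  ring

section sol
variable {ε γ ν κ T : ℝ} {P Φ : ℝ → ℝ} {ρ : ℝ → (Fin 2 → ℝ) → ℝ}
  {u w : ℝ → (Fin 2 → ℝ) → (Fin 2 → ℝ)}

lemma IsQNSSol.stsR (h : IsQNSSol 2 ε γ ν κ T P ρ u) : STS T ρ := h.1

lemma IsQNSSol.stsU (h : IsQNSSol 2 ε γ ν κ T P ρ u) (i : Fin 2) :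
    STS T (fun s y => u s y i) := (contDiffOn_pi.1 h.2.1) i

lemma w_sts (hT : 0 < T) (h : IsQNSSol 2 ε γ ν κ T P ρ u) (hΦ : IsPhieps ε γ Φ)
    (hw : ∀ s y i, w s y i = u s y i + muof ν κ * grad (fun z => Φ (ρ s z)) y i) (i : Fin 2) :
    STS T (fun s y => w s y i) := by
  have : (fun s y => w s y i) = fun s y => u s y i + muof ν κ * pd i (fun z => Φ (ρ s z)) y := by
    funext s y; exact hw s y i
  rw [this]
  exact (h.stsU i).add ((STS.const _).mul
    (STS.pd hT (f := fun s z => Φ (ρ s z)) (h.stsR.comp h.2.2.1 hΦ.1) i))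

lemma muof_eq (hκ : 0 < κ) (hνκ : κ < ν) :
    (muof ν κ) ^ 2 - 2 * ν * muof ν κ + κ ^ 2 = 0 ∧ 0 < muof ν κ ∧ muof ν κ < ν := by
  unfold muof
  have h1 : 0 < ν ^ 2 - κ ^ 2 := by nlinarith
  have h2 := Real.sq_sqrt h1.le
  have h3 := Real.sqrt_pos.2 h1
  refine ⟨by linear_combination h2, ?_, by linarith⟩
  have : √(ν ^ 2 - κ ^ 2) < ν := by
    rw [Real.sqrt_lt' (by linarith)]; nlinarith
  linarith

lemma w_eq (hκ : 0 < κ) (hνκ : κ < ν) (h : IsQNSSol 2 ε γ ν κ T P ρ u)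
    (hP : IsPeps ε γ ν κ P) (hΦ : IsPhieps ε γ Φ)
    (hw : ∀ s y i, w s y i = u s y i + muof ν κ * grad (fun z => Φ (ρ s z)) y i)
    {t : ℝ} (ht : t ∈ Set.Ioo 0 T) (x : Fin 2 → ℝ) (i : Fin 2) :
    ρ t x * deriv (fun s => w s x i) t + ρ t x * ∑ j, u t x j * pd j (fun y => w t y i) x
      + pd i (fun y => ρ t y ^ γ) x + ptil ε (ρ t x) * w t x i
    = ∑ j, pd j (stress ν (muof ν κ) (fun y => hfun ε γ (ρ t y)) (fun y => gfun ε γ (ρ t y))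
        (fun k y => w t y k) i j) x := by
  obtain ⟨hR, hu, h0, hpR, hpu, hcont, hmom⟩ := id h
  have htI := Set.Ioo_subset_Icc_self ht
  have hRs : Sm (ρ t) := h.stsR.sm htI
  have hUs : ∀ k, Sm (fun y => u t y k) := fun k => (h.stsU k).sm htI
  have hPhis := sm_Phi hRs (h0 t) hΦ.1
  have hVs : ∀ k, Sm (fun y => pd k (fun z => Φ (ρ t z)) y) := fun k => hPhis.pd k
  have hV := fun k y => pd_Phi hRs (h0 t) hΦ k y
  have hHs := sm_H hRs (h0 t) ε γ
  have hQs := sm_Q hRs (h0 t) ε γ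
  have hW : (fun k y => w t y k) = fun (k : Fin 2) y => u t y k
      + muof ν κ * pd k (fun z => Φ (ρ t z)) y := by
    funext k y; exact hw t y k
  have hcont' : ∀ y, deriv (fun s => ρ s y) t + ∑ j, pd j (fun y => ρ t y * u t y j) y = 0 :=
    fun y => hcont t ht y
  have hΦs : STS T (fun s z => Φ (ρ s z)) := h.stsR.comp h0 hΦ.1
  -- time derivative of the potential
  have hPt : ∀ y, deriv (fun s => Φ (ρ s y)) t
      = -1 * (deriv (hfun ε γ) (ρ t y) * (∑ k, pd k (fun y => u t y k) y)
        + ∑ k, u t y k * pd k (fun z => Φ (ρ t z)) y) := by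
    intro y
    have hd : HasDerivAt Φ (deriv Φ (ρ t y)) (ρ t y) :=
      ((hΦ.1.differentiableOn (by simp)).differentiableAt (Ioi_mem_nhds (h0 t y))).hasDerivAt
    have hd2 := (HasDerivAt.comp t hd (h.stsR.hasDerivAt ht y)).deriv
    have hd3 : deriv (fun s => Φ (ρ s y)) t = deriv Φ (ρ t y) * deriv (fun s => ρ s y) t := hd2
    have hc := hcont' y
    simp only [pd_mul hRs (hUs _), Fin.sum_univ_two] at hc ⊢
    have p0 := pd_comp y hd hRs 0
    have p1 := pd_comp y hd hRs 1
    rw [hd3, p0, p1, ← hΦ.2 _ (h0 t y)]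
    linear_combination deriv Φ (ρ t y) * hc
  have hwt : deriv (fun s => w s x i) t = deriv (fun s => u s x i) t + muof ν κ *
      (-pd i (fun y => deriv (hfun ε γ) (ρ t y) * (∑ k, pd k (fun y => u t y k) y)
        + ∑ k, u t y k * pd k (fun z => Φ (ρ t z)) y) x) := by
    have e1 : (fun s => w s x i) = fun s => u s x i + muof ν κ * pd i (fun z => Φ (ρ s z)) x := by
      funext s; exact hw s x i
    have hc := hΦs.comm ht x i
    simp only [hPt] at hc
    have hd := ((h.stsU i).hasDerivAt ht x).add (hc.const_mul (muof ν κ))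
    rw [e1]
    have hd' := hd.deriv
    refine hd'.trans ?_
    congr 2
    have hsm : Sm (fun y => deriv (hfun ε γ) (ρ t y) * (∑ k, pd k (fun y => u t y k) y)
        + ∑ k, u t y k * pd k (fun z => Φ (ρ t z)) y) := by
      simp only [Fin.sum_univ_two]
      exact (hQs.mul (((hUs 0).pd 0).add ((hUs 1).pd 1))).add
        (((hUs 0).mul (hVs 0)).add ((hUs 1).mul (hVs 1)))
    rw [pd_mul (Sm.const (-1)) hsm, pd_const]; ring
  have hpres : grad (fun y => ρ t y ^ γ + P (ρ t y)) x i
      = pd i (fun y => ρ t y ^ γ) x + ptil ε (ρ t x) * (muof ν κ * pd i (fun z => Φ (ρ t z)) x) := by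
    have hd := (Real.hasDerivAt_rpow_const (x := ρ t x) (p := γ) (Or.inl (h0 t x).ne'))
    have hd2 := hP _ (h0 t x)
    unfold grad
    rw [pd_comp (G := fun r => r ^ γ + P r) x (hd.add hd2) hRs i, pd_comp x hd hRs i]
    have := hV i x
    have h0' := h0 t x
    field_simp
    linear_combination (-(ptil ε (ρ t x) * muof ν κ)) * this
  have hm := hmom t ht x i
  rw [hpres, Kvec_eq hRs (h0 t) hΦ] at hm
  have hdm := ((h.stsR.hasDerivAt ht x).mul ((h.stsU i).hasDerivAt ht x)).deriv
  have hdm' : deriv (fun s => ρ s x * u s x i) t = _ := hdm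
  rw [hdm'] at hm
  have key := weq ν κ (muof ν κ) (muof_eq hκ hνκ).1 (ρ t) (fun y => hfun ε γ (ρ t y))
    (fun y => deriv (hfun ε γ) (ρ t y)) (fun k y => u t y k)
    (fun k y => pd k (fun z => Φ (ρ t z)) y) hRs hHs hQs hUs hVs
    (fun k y => by rw [pd_H hRs (h0 t), hV]) (fun k y => (hV k y).symm)
    (fun k l y => pd_comm hPhis k l y) x i (deriv (fun s => ρ s x) t)
    (deriv (fun s => u s x i) t) (pd i (fun y => ρ t y ^ γ) x) (ptil ε (ρ t x)) (hcont' x)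
    (by
      simp only [dvgM, symD, jac, grad, gfun, dvg] at hm
      linear_combination hm)
  rw [hwt]
  have hwi : (fun y => w t y i) = fun y => u t y i + muof ν κ * pd i (fun z => Φ (ρ t z)) y := by
    funext y; exact hw t y i
  have hwx : w t x i = u t x i + muof ν κ * pd i (fun z => Φ (ρ t z)) x := hw t x i
  rw [hwi, hwx, hW]
  exact key

end sol

lemma coer_aux {ν μ h g a b c d : ℝ} (hμ : 0 < μ) (hμν : μ < ν)
    (hh : 0 < h) (hg1 : -(h / 8) ≤ g) :
    3 / 4 * μ * h * (a ^ 2 + b ^ 2 + c ^ 2 + d ^ 2) ≤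
      (h * (ν * a + (ν - μ) * a) + (2 * ν - μ) * (g * (a + d))) * a
      + (h * (ν * b + (ν - μ) * c)) * b + (h * (ν * c + (ν - μ) * b)) * c
      + (h * (ν * d + (ν - μ) * d) + (2 * ν - μ) * (g * (a + d))) * d := by
  have h1 : 0 ≤ h * (ν - μ) * (b + c) ^ 2 :=
    mul_nonneg (mul_nonneg hh.le (by linarith)) (sq_nonneg _)
  have h2 : 0 ≤ (2 * ν - μ) * (g + h / 8) * (a + d) ^ 2 :=
    mul_nonneg (mul_nonneg (by linarith) (by linarith)) (sq_nonneg _)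
  have h3 : 0 ≤ (2 * ν - μ) * h * (a - d) ^ 2 :=
    mul_nonneg (mul_nonneg (by linarith) hh.le) (sq_nonneg _)
  have h4 : 0 ≤ (ν - μ) * h * (a ^ 2 + d ^ 2) :=
    mul_nonneg (mul_nonneg (by linarith) hh.le) (by positivity)
  have h5 : 0 ≤ μ * h * (b ^ 2 + c ^ 2) := by positivity
  linarith

lemma coer {ν μ γ h g δ pr a b c d x00 x01 x10 x11 : ℝ} (hμ : 0 < μ) (hμν : μ < ν)
    (hγ : 1 < γ) (hh : 0 < h) (hg1 : -(h / 8) ≤ g) (hg2 : g ≤ γ * h) (hδ : 0 ≤ δ)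
    (hδ2 : δ * (192 * ν * γ) ≤ μ) (hpr : 0 ≤ pr)
    (hx : x00 ^ 2 + x01 ^ 2 + x10 ^ 2 + x11 ^ 2 ≤ 4 * (a ^ 2 + b ^ 2 + c ^ 2 + d ^ 2)) :
    pr * ((a + δ * x00) + (d + δ * x11)) -
      ((h * (ν * a + (ν - μ) * a) + (2 * ν - μ) * (g * (a + d))) * (a + δ * x00)
      + (h * (ν * b + (ν - μ) * c)) * (b + δ * x01)
      + (h * (ν * c + (ν - μ) * b)) * (c + δ * x10)
      + (h * (ν * d + (ν - μ) * d) + (2 * ν - μ) * (g * (a + d))) * (d + δ * x11))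
    ≤ 18 / μ * (pr ^ 2 / h) := by
  have hν : 0 < ν := by linarith
  obtain ⟨s, hs0, hs⟩ : ∃ s : ℝ, 0 ≤ s ∧ s ^ 2 = a ^ 2 + b ^ 2 + c ^ 2 + d ^ 2 :=
    ⟨√(a ^ 2 + b ^ 2 + c ^ 2 + d ^ 2), Real.sqrt_nonneg _, Real.sq_sqrt (by positivity)⟩
  have ha : |a| ≤ s := abs_le_of_sq_le_sq (by nlinarith [sq_nonneg b, sq_nonneg c, sq_nonneg d]) hs0
  have hb : |b| ≤ s := abs_le_of_sq_le_sq (by nlinarith [sq_nonneg a, sq_nonneg c, sq_nonneg d]) hs0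
  have hc : |c| ≤ s := abs_le_of_sq_le_sq (by nlinarith [sq_nonneg b, sq_nonneg a, sq_nonneg d]) hs0
  have hd : |d| ≤ s := abs_le_of_sq_le_sq (by nlinarith [sq_nonneg b, sq_nonneg c, sq_nonneg a]) hs0
  have h2s : 0 ≤ 2 * s := by linarith
  have h00 : |x00| ≤ 2 * s := abs_le_of_sq_le_sq
    (by nlinarith [sq_nonneg x01, sq_nonneg x10, sq_nonneg x11]) h2s
  have h01 : |x01| ≤ 2 * s := abs_le_of_sq_le_sq
    (by nlinarith [sq_nonneg x00, sq_nonneg x10, sq_nonneg x11]) h2s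
  have h10 : |x10| ≤ 2 * s := abs_le_of_sq_le_sq
    (by nlinarith [sq_nonneg x01, sq_nonneg x00, sq_nonneg x11]) h2s
  have h11 : |x11| ≤ 2 * s := abs_le_of_sq_le_sq
    (by nlinarith [sq_nonneg x01, sq_nonneg x10, sq_nonneg x00]) h2s
  have hgabs : |g| ≤ γ * h := by
    rw [abs_le]; refine ⟨?_, hg2⟩; nlinarith
  have hsum : ∀ y z : ℝ, |y| ≤ s → |z| ≤ s → |ν * y + (ν - μ) * z| ≤ 2 * ν * s := by
    intro y z hy hz
    calc |ν * y + (ν - μ) * z| ≤ |ν * y| + |(ν - μ) * z| := abs_add_le _ _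
      _ = ν * |y| + (ν - μ) * |z| := by
        rw [abs_mul, abs_mul, abs_of_pos hν, abs_of_pos (by linarith : 0 < ν - μ)]
      _ ≤ ν * s + (ν - μ) * s := by
        gcongr
      _ ≤ 2 * ν * s := by nlinarith
  have hhs : ∀ y z : ℝ, |y| ≤ s → |z| ≤ s →
      |h * (ν * y + (ν - μ) * z)| ≤ 2 * ν * γ * h * s := by
    intro y z hy hz
    rw [abs_mul, abs_of_pos hh]
    calc h * |ν * y + (ν - μ) * z| ≤ h * (2 * ν * s) := by gcongr; exact hsum y z hy hz
      _ = 1 * (2 * ν * h * s) := by ring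
      _ ≤ γ * (2 * ν * h * s) := by gcongr
      _ = _ := by ring
  have hG : |(2 * ν - μ) * (g * (a + d))| ≤ 4 * ν * γ * h * s := by
    rw [abs_mul, abs_mul, abs_of_pos (by linarith : 0 < 2 * ν - μ)]
    have : |a + d| ≤ 2 * s := (abs_add_le _ _).trans (by linarith)
    calc (2 * ν - μ) * (|g| * |a + d|) ≤ (2 * ν) * ((γ * h) * (2 * s)) := by
          gcongr; linarith
      _ = _ := by ring
  have hnn : 0 ≤ ν * γ * h * s := by positivity
  have hprod : ∀ y x : ℝ, |y| ≤ 6 * ν * γ * h * s → |x| ≤ 2 * s →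
      -(y * x) ≤ 12 * ν * γ * h * s ^ 2 := by
    intro y x hy hx
    calc -(y * x) ≤ |y * x| := neg_le_abs _
      _ = |y| * |x| := abs_mul _ _
      _ ≤ (6 * ν * γ * h * s) * (2 * s) := by gcongr
      _ = _ := by ring
  have k00 := hprod (h * (ν * a + (ν - μ) * a) + (2 * ν - μ) * (g * (a + d))) x00
    ((abs_add_le _ _).trans (by linarith [hhs a a ha ha])) h00
  have k01 := hprod (h * (ν * b + (ν - μ) * c)) x01 (by linarith [hhs b c hb hc]) h01
  have k10 := hprod (h * (ν * c + (ν - μ) * b)) x10 (by linarith [hhs c b hc hb]) h10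
  have k11 := hprod (h * (ν * d + (ν - μ) * d) + (2 * ν - μ) * (g * (a + d))) x11
    ((abs_add_le _ _).trans (by linarith [hhs d d hd hd])) h11
  have hmain := coer_aux (a := a) (b := b) (c := c) (d := d) hμ hμν hh hg1
  rw [← hs] at hmain
  have hδs : δ * (48 * ν * γ * h * s ^ 2) ≤ μ / 4 * h * s ^ 2 := by
    have : 0 ≤ h * s ^ 2 := by positivity
    have h9 := mul_le_mul_of_nonneg_right hδ2 this
    clear * - h9
    linarith
  have hδ1 : δ ≤ 1 := by
    have hνγ : ν * 1 ≤ ν * γ := mul_le_mul_of_nonneg_left hγ.le hν.le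
    have hpos : 0 < 192 * ν * γ := by positivity
    exact le_of_mul_le_mul_right (by linarith : δ * (192 * ν * γ) ≤ 1 * (192 * ν * γ)) hpos
  have hp : pr * ((a + δ * x00) + (d + δ * x11)) ≤ pr * (6 * s) := by
    refine mul_le_mul_of_nonneg_left ?_ hpr
    have e1 : δ * x00 ≤ 1 * (2 * s) := (mul_le_mul_of_nonneg_left (le_of_abs_le h00) hδ).trans
      (mul_le_mul_of_nonneg_right hδ1 h2s)
    have e2 : δ * x11 ≤ 1 * (2 * s) := (mul_le_mul_of_nonneg_left (le_of_abs_le h11) hδ).trans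
      (mul_le_mul_of_nonneg_right hδ1 h2s)
    linarith [le_of_abs_le ha, le_of_abs_le hd]
  have hy : pr * (6 * s) ≤ μ / 2 * h * s ^ 2 + 18 / μ * (pr ^ 2 / h) := by
    have : μ / 2 * h * s ^ 2 + 18 / μ * (pr ^ 2 / h) - pr * (6 * s)
      = (μ * h * s - 6 * pr) ^ 2 / (2 * μ * h) := by
      field_simp; ring
    have h2 : 0 ≤ (μ * h * s - 6 * pr) ^ 2 / (2 * μ * h) := by positivity
    linarith
  have hδk := mul_le_mul_of_nonneg_left (add_le_add (add_le_add (add_le_add k00 k01) k10) k11) hδ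
  clear * - hδk hmain hp hy hδs
  linarith

lemma theta_bound (a b c d p q : ℝ) :
    (2 * p * (p * a + q * c) / (1 + (p * p + q * q))) ^ 2
    + (2 * p * (p * b + q * d) / (1 + (p * p + q * q))) ^ 2
    + (2 * q * (p * a + q * c) / (1 + (p * p + q * q))) ^ 2
    + (2 * q * (p * b + q * d) / (1 + (p * p + q * q))) ^ 2
    ≤ 4 * (a ^ 2 + b ^ 2 + c ^ 2 + d ^ 2) := by
  have hN : 0 < 1 + (p * p + q * q) := by nlinarith [mul_self_nonneg p, mul_self_nonneg q]
  simp only [div_pow]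
  rw [← add_div, ← add_div, ← add_div, div_le_iff₀ (by positivity)]
  have e1 : (p * a + q * c) ^ 2 ≤ (p * p + q * q) * (a ^ 2 + c ^ 2) := by
    nlinarith [sq_nonneg (p * c - q * a)]
  have e2 : (p * b + q * d) ^ 2 ≤ (p * p + q * q) * (b ^ 2 + d ^ 2) := by
    nlinarith [sq_nonneg (p * d - q * b)]
  have hs : 0 ≤ p * p + q * q := by nlinarith [mul_self_nonneg p, mul_self_nonneg q]
  have e3 : (p * p + q * q) * ((p * a + q * c) ^ 2 + (p * b + q * d) ^ 2)
      ≤ (p * p + q * q) * ((p * p + q * q) * (a ^ 2 + b ^ 2 + c ^ 2 + d ^ 2)) :=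
    mul_le_mul_of_nonneg_left (by linarith) hs
  have e4 : (p * p + q * q) * ((p * p + q * q) * (a ^ 2 + b ^ 2 + c ^ 2 + d ^ 2))
      ≤ (1 + (p * p + q * q)) ^ 2 * (a ^ 2 + b ^ 2 + c ^ 2 + d ^ 2) := by
    rw [← mul_assoc]
    refine mul_le_mul_of_nonneg_right ?_ (by positivity)
    nlinarith
  nlinarith

lemma gfun_bounds {ε γ r : ℝ} (hε : 0 < ε) (hγ : 1 < γ) (hr : 0 < r) :
    0 < hfun ε γ r ∧ -(hfun ε γ r / 8) ≤ gfun ε γ r ∧ gfun ε γ r ≤ γ * hfun ε γ r ∧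
    ε * r ^ γ ≤ hfun ε γ r := by
  have h1 : 0 < r ^ ((7 : ℝ) / 8) := Real.rpow_pos_of_pos hr _
  have h2 : 0 < r ^ γ := Real.rpow_pos_of_pos hr _
  have e1 : r * r ^ ((7 : ℝ) / 8 - 1) = r ^ ((7 : ℝ) / 8) := by
    rw [Real.rpow_sub_one hr.ne']; field_simp
  have e2 : r * r ^ (γ - 1) = r ^ γ := by
    rw [Real.rpow_sub_one hr.ne']; field_simp
  have hg : gfun ε γ r = -(1 / 8) * (ε * r ^ ((7 : ℝ) / 8)) + (γ - 1) * (ε * r ^ γ) := by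
    unfold gfun
    rw [deriv_hfun ε γ hr]
    unfold qf hfun
    linear_combination ε * (7 / 8) * e1 + ε * γ * e2
  have k1 := mul_pos hε h1
  have k2 := mul_pos hε h2
  have k3 := mul_pos (by linarith : 0 < γ - 1) k2
  have k4 := mul_pos (by linarith : 0 < γ - 1) k1
  have k5 := mul_pos (by linarith : 0 < γ - 1) hr
  rw [hg]
  unfold hfun
  refine ⟨by linarith, by linarith, by nlinarith, by linarith⟩

lemma damping {ε γ r M s δ : ℝ} (hε : 0 < ε) (hγ : 1 < γ) (hεγ : ε < 1 / γ) (hr : 0 < r)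
    (hM : 0 ≤ M) (hs : 0 ≤ s) (hδ : 0 ≤ δ) :
    (1 + s) ^ δ * (M * r ^ γ - ptil ε r * s) ≤ M * (1 + M / lamfun ε) ^ δ * r ^ γ := by
  have hl : 0 < lamfun ε := Real.exp_pos _
  have hrg : 0 < r ^ γ := Real.rpow_pos_of_pos hr _
  have h1 : 0 < r ^ (1 / ε ^ 2) := Real.rpow_pos_of_pos hr _
  have h2 : 0 < r ^ (-(1 / ε ^ 2)) := Real.rpow_pos_of_pos hr _
  have hpt : lamfun ε * r ^ γ ≤ ptil ε r := by
    unfold ptil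
    refine mul_le_mul_of_nonneg_left ?_ hl.le
    rcases le_total 1 r with h | h
    · have : γ ≤ 1 / ε ^ 2 := by
        have hεγ' : ε * γ < 1 := by rwa [lt_div_iff₀ (by linarith)] at hεγ
        rw [le_div_iff₀ (by positivity)]
        have : ε < 1 := by nlinarith
        nlinarith
      have := Real.rpow_le_rpow_of_exponent_le h this
      linarith
    · have e1 : r ^ γ ≤ 1 := Real.rpow_le_one hr.le h (by linarith)
      have e2 : 1 ≤ r ^ (-(1 / ε ^ 2)) :=
        Real.one_le_rpow_of_pos_of_le_one_of_nonpos hr h (by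
          have : 0 < 1 / ε ^ 2 := by positivity
          linarith)
      linarith
  have hr0 : 0 ≤ M * (1 + M / lamfun ε) ^ δ * r ^ γ := by positivity
  have hN : 0 < (1 + s) ^ δ := Real.rpow_pos_of_pos (by linarith) _
  have hp0 : 0 ≤ ptil ε r * s := mul_nonneg (le_trans (by positivity) hpt) hs
  rcases le_total (M * r ^ γ) (ptil ε r * s) with h | h
  · exact le_trans (mul_nonpos_of_nonneg_of_nonpos hN.le (by linarith)) hr0
  · have hsM : s ≤ M / lamfun ε := by
      rw [le_div_iff₀ hl]
      have : (lamfun ε * r ^ γ) * s ≤ M * r ^ γ := (mul_le_mul_of_nonneg_right hpt hs).trans h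
      by_contra hcon
      push Not at hcon
      nlinarith [mul_lt_mul_of_pos_right hcon hrg]
    have e1 : (1 + s) ^ δ ≤ (1 + M / lamfun ε) ^ δ :=
      Real.rpow_le_rpow (by linarith) (by linarith) hδ
    calc (1 + s) ^ δ * (M * r ^ γ - ptil ε r * s) ≤ (1 + s) ^ δ * (M * r ^ γ) := by
          gcongr; linarith
      _ ≤ (1 + M / lamfun ε) ^ δ * (M * r ^ γ) := by gcongr
      _ = _ := by ring

/-- `1 + |W|²`. -/
def Nf (W : Fin 2 → (Fin 2 → ℝ) → ℝ) (y : Fin 2 → ℝ) : ℝ :=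
  1 + (W 0 y * W 0 y + W 1 y * W 1 y)

/-- The energy density `(1+|W|²)^(1+δ) / (2(1+δ))`. -/
def Psi (δ : ℝ) (W : Fin 2 → (Fin 2 → ℝ) → ℝ) (y : Fin 2 → ℝ) : ℝ :=
  Nf W y ^ (1 + δ) / (2 * (1 + δ))

/-- The basic flux. -/
def Fb (δ : ℝ) (R : (Fin 2 → ℝ) → ℝ) (U W : Fin 2 → (Fin 2 → ℝ) → ℝ)
    (S : Fin 2 → Fin 2 → (Fin 2 → ℝ) → ℝ) (j : Fin 2) (y : Fin 2 → ℝ) : ℝ :=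
  Nf W y ^ δ * (W 0 y * S 0 j y + W 1 y * S 1 j y) - (R y * U j y) * Psi δ W y

lemma Nf_pos (W : Fin 2 → (Fin 2 → ℝ) → ℝ) (y : Fin 2 → ℝ) : 0 < Nf W y := by
  unfold Nf; nlinarith [mul_self_nonneg (W 0 y), mul_self_nonneg (W 1 y)]

section slice
variable {R : (Fin 2 → ℝ) → ℝ} {U W : Fin 2 → (Fin 2 → ℝ) → ℝ}
  {S : Fin 2 → Fin 2 → (Fin 2 → ℝ) → ℝ}

lemma sm_Nf (hW : ∀ i, Sm (W i)) : Sm (Nf W) :=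
  (Sm.const 1).add (((hW 0).mul (hW 0)).add ((hW 1).mul (hW 1)))

lemma sm_Nfpow (hW : ∀ i, Sm (W i)) (a : ℝ) : Sm (fun y => Nf W y ^ a) :=
  (sm_Nf hW).rpow (Nf_pos W) a

lemma sm_Psi (δ : ℝ) (hW : ∀ i, Sm (W i)) : Sm (Psi δ W) :=
  (sm_Nfpow hW (1 + δ)).div_const _

lemma sm_Fb (δ : ℝ) (hR : Sm R) (hU : ∀ i, Sm (U i)) (hW : ∀ i, Sm (W i))
    (hS : ∀ i j, Sm (S i j)) (j : Fin 2) : Sm (Fb δ R U W S j) :=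
  ((sm_Nfpow hW δ).mul (((hW 0).mul (hS 0 j)).add ((hW 1).mul (hS 1 j)))).sub
    ((hR.mul (hU j)).mul (sm_Psi δ hW))

lemma pd_Nf (hW : ∀ i, Sm (W i)) (j x) :
    pd j (Nf W) x = 2 * (W 0 x * pd j (W 0) x + W 1 x * pd j (W 1) x) := by
  have : Nf W = fun y => 1 + (W 0 y * W 0 y + W 1 y * W 1 y) := rfl
  rw [this, pd_add (Sm.const 1) (((hW 0).mul (hW 0)).add ((hW 1).mul (hW 1))), pd_const,
    pd_add ((hW 0).mul (hW 0)) ((hW 1).mul (hW 1)), pd_mul (hW 0) (hW 0), pd_mul (hW 1) (hW 1)]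
  ring

lemma pd_Nfpow (hW : ∀ i, Sm (W i)) (a : ℝ) (j x) :
    pd j (fun y => Nf W y ^ a) x =
      Nf W x ^ a * (a * (2 * (W 0 x * pd j (W 0) x + W 1 x * pd j (W 1) x) / Nf W x)) := by
  have hp := Nf_pos W x
  rw [pd_comp (G := fun r => r ^ a) x (Real.hasDerivAt_rpow_const (Or.inl hp.ne')) (sm_Nf hW) j,
    pd_Nf hW, Real.rpow_sub_one hp.ne']
  ring

lemma pd_Psi (hW : ∀ i, Sm (W i)) {δ : ℝ} (hδ : 0 ≤ δ) (j x) :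
    pd j (Psi δ W) x = Nf W x ^ δ * (W 0 x * pd j (W 0) x + W 1 x * pd j (W 1) x) := by
  have hp := Nf_pos W x
  have : Psi δ W = fun y => Nf W y ^ (1 + δ) / (2 * (1 + δ)) := rfl
  rw [this, pd_div_const (sm_Nfpow hW (1 + δ)), pd_Nfpow hW, Real.rpow_one_add' hp.le (by linarith)]
  field_simp

lemma base_id (hR : Sm R) (hU : ∀ i, Sm (U i)) (hW : ∀ i, Sm (W i)) (hS : ∀ i j, Sm (S i j))
    {δ : ℝ} (hδ : 0 ≤ δ) (x : Fin 2 → ℝ) (rt pt : ℝ) (wt pg : Fin 2 → ℝ)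
    (hcont : rt + ∑ j, pd j (fun y => R y * U j y) x = 0)
    (hweq : ∀ i, R x * wt i + R x * ∑ j, U j x * pd j (W i) x + pg i + pt * W i x
      = ∑ j, pd j (S i j) x) :
    rt * Psi δ W x + R x * (Nf W x ^ δ * (W 0 x * wt 0 + W 1 x * wt 1)) =
      ∑ j, pd j (Fb δ R U W S j) x - Nf W x ^ δ * (W 0 x * pg 0 + W 1 x * pg 1)
      - Nf W x ^ δ * (pt * (W 0 x * W 0 x + W 1 x * W 1 x))
      - Nf W x ^ δ * (
        S 0 0 x * (pd 0 (W 0) x + δ *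
          (2 * W 0 x * (W 0 x * pd 0 (W 0) x + W 1 x * pd 0 (W 1) x) / Nf W x))
        + S 0 1 x * (pd 1 (W 0) x + δ *
          (2 * W 0 x * (W 0 x * pd 1 (W 0) x + W 1 x * pd 1 (W 1) x) / Nf W x))
        + S 1 0 x * (pd 0 (W 1) x + δ *
          (2 * W 1 x * (W 0 x * pd 0 (W 0) x + W 1 x * pd 0 (W 1) x) / Nf W x))
        + S 1 1 x * (pd 1 (W 1) x + δ *
          (2 * W 1 x * (W 0 x * pd 1 (W 0) x + W 1 x * pd 1 (W 1) x) / Nf W x))) := by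
  have hF : ∀ j, pd j (Fb δ R U W S j) x =
      Nf W x ^ δ * (δ * (2 * (W 0 x * pd j (W 0) x + W 1 x * pd j (W 1) x) / Nf W x)) *
        (W 0 x * S 0 j x + W 1 x * S 1 j x)
      + Nf W x ^ δ * (pd j (W 0) x * S 0 j x + W 0 x * pd j (S 0 j) x
        + (pd j (W 1) x * S 1 j x + W 1 x * pd j (S 1 j) x))
      - (pd j (fun y => R y * U j y) x * Psi δ W x + (R x * U j x) *
        (Nf W x ^ δ * (W 0 x * pd j (W 0) x + W 1 x * pd j (W 1) x))) := by
    intro j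
    have h1 := (hW 0).mul (hS 0 j)
    have h2 := (hW 1).mul (hS 1 j)
    have : Fb δ R U W S j = fun y => Nf W y ^ δ * (W 0 y * S 0 j y + W 1 y * S 1 j y)
      - (R y * U j y) * Psi δ W y := rfl
    rw [this, pd_sub ((sm_Nfpow hW δ).mul (h1.add h2)) ((hR.mul (hU j)).mul (sm_Psi δ hW)),
      pd_mul (sm_Nfpow hW δ) (h1.add h2), pd_mul (hR.mul (hU j)) (sm_Psi δ hW),
      pd_add h1 h2, pd_mul (hW 0) (hS 0 j), pd_mul (hW 1) (hS 1 j), pd_Nfpow hW, pd_Psi hW hδ]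
  have e0 := hweq 0
  have e1 := hweq 1
  simp only [Fin.sum_univ_two, hF] at *
  linear_combination (Psi δ W x) * hcont + Nf W x ^ δ * W 0 x * e0 + Nf W x ^ δ * W 1 x * e1

lemma delta_ineq (hR : Sm R) (hR0 : ∀ y, 0 < R y) (hU : ∀ i, Sm (U i)) (hW : ∀ i, Sm (W i))
    {H G : (Fin 2 → ℝ) → ℝ} {ν μ γ δ : ℝ}
    (hS : ∀ i j, Sm (stress ν μ H G W i j)) (x : Fin 2 → ℝ) (rt pt : ℝ) (wt : Fin 2 → ℝ)
    (hcont : rt + ∑ j, pd j (fun y => R y * U j y) x = 0)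
    (hweq : ∀ i, R x * wt i + R x * ∑ j, U j x * pd j (W i) x + pd i (fun y => R y ^ γ) x
      + pt * W i x = ∑ j, pd j (stress ν μ H G W i j) x)
    (hμ : 0 < μ) (hμν : μ < ν)
    (hγ : 1 < γ) (hh : 0 < H x) (hg1 : -(H x / 8) ≤ G x) (hg2 : G x ≤ γ * H x) (hδ : 0 ≤ δ)
    (hδ2 : δ * (192 * ν * γ) ≤ μ) :
    rt * Psi δ W x + R x * (Nf W x ^ δ * (W 0 x * wt 0 + W 1 x * wt 1)) ≤
      ∑ j, pd j (fun y => Fb δ R U W (stress ν μ H G W) j y - R y ^ γ * (Nf W y ^ δ * W j y)) x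
      + Nf W x ^ δ * (18 / μ * ((R x ^ γ) ^ 2 / H x)
        - pt * (W 0 x * W 0 x + W 1 x * W 1 x)) := by
  rw [base_id hR hU hW hS hδ x rt pt wt _ hcont hweq]
  have hRg := hR.rpow hR0 γ
  have hF : ∀ j, pd j (fun y => Fb δ R U W (stress ν μ H G W) j y
      - R y ^ γ * (Nf W y ^ δ * W j y)) x = pd j (Fb δ R U W (stress ν μ H G W) j) x
      - (pd j (fun y => R y ^ γ) x * (Nf W x ^ δ * W j x) + R x ^ γ * (
      Nf W x ^ δ * (δ * (2 * (W 0 x * pd j (W 0) x + W 1 x * pd j (W 1) x) / Nf W x)) * W j x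
      + Nf W x ^ δ * pd j (W j) x)) := by
    intro j
    have h1 := (sm_Nfpow hW δ).mul (hW j)
    rw [pd_sub (sm_Fb δ hR hU hW hS j) (hRg.mul h1), pd_mul hRg h1, pd_mul (sm_Nfpow hW δ) (hW j),
      pd_Nfpow hW]
  have key := coer hμ hμν hγ hh hg1 hg2 hδ hδ2 (Real.rpow_nonneg (hR0 x).le γ)
    (theta_bound (pd 0 (W 0) x) (pd 1 (W 0) x) (pd 0 (W 1) x) (pd 1 (W 1) x) (W 0 x) (W 1 x))
  have key2 := mul_le_mul_of_nonneg_left key (Real.rpow_nonneg (Nf_pos W x).le δ)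
  simp only [Fin.sum_univ_two, hF]
  simp only [stress, if_true, if_neg (by decide : ¬ ((0 : Fin 2) = 1)),
    if_neg (by decide : ¬ ((1 : Fin 2) = 0)), zero_mul, add_zero]
  have hN : 1 + (W 0 x * W 0 x + W 1 x * W 1 x) = Nf W x := rfl
  rw [hN] at key2
  clear * - key2
  linear_combination key2

lemma energy_ineq (hR : Sm R) (hR0 : ∀ y, 0 < R y) (hU : ∀ i, Sm (U i)) (hW : ∀ i, Sm (W i))
    {H G : (Fin 2 → ℝ) → ℝ} {ν μ γ : ℝ}
    (hS : ∀ i j, Sm (stress ν μ H G W i j)) (x : Fin 2 → ℝ) (rt pt : ℝ) (wt : Fin 2 → ℝ)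
    (hcont : rt + ∑ j, pd j (fun y => R y * U j y) x = 0)
    (hweq : ∀ i, R x * wt i + R x * ∑ j, U j x * pd j (W i) x + pd i (fun y => R y ^ γ) x
      + pt * W i x = ∑ j, pd j (stress ν μ H G W i j) x)
    (hμ : 0 < μ) (hμν : μ < ν)
    (hγ : 1 < γ) (hh : 0 < H x) (hg1 : -(H x / 8) ≤ G x) (hpt : 0 ≤ pt)
    (hWU : ∀ i, 0 ≤ (W i x - U i x) * pd i (fun y => R y ^ γ) x) :
    rt * Psi 0 W x + R x * (Nf W x ^ (0 : ℝ) * (W 0 x * wt 0 + W 1 x * wt 1))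
      + γ * R x ^ (γ - 1) * rt / (γ - 1) ≤
      ∑ j, pd j (fun y => Fb 0 R U W (stress ν μ H G W) j y -
        (γ / (γ - 1)) * (R y ^ γ * U j y)) x := by
  have hb := base_id hR hU hW hS le_rfl x rt pt wt _ hcont hweq
  have hRg := hR.rpow hR0 γ
  have hF : ∀ j, pd j (fun y => Fb 0 R U W (stress ν μ H G W) j y
      - (γ / (γ - 1)) * (R y ^ γ * U j y)) x = pd j (Fb 0 R U W (stress ν μ H G W) j) x
      - (γ / (γ - 1)) * (pd j (fun y => R y ^ γ) x * U j x + R x ^ γ * pd j (U j) x) := by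
    intro j
    have h1 := hRg.mul (hU j)
    rw [pd_sub (sm_Fb 0 hR hU hW hS j) ((Sm.const _).mul h1), pd_mul (Sm.const _) h1, pd_const,
      pd_mul hRg (hU j)]
    ring
  have hpg : ∀ j, pd j (fun y => R y ^ γ) x = γ * R x ^ (γ - 1) * pd j R x := fun j =>
    pd_comp (G := fun r => r ^ γ) x (Real.hasDerivAt_rpow_const (Or.inl (hR0 x).ne')) hR j
  have hRR : R x ^ γ = R x ^ (γ - 1) * R x := by
    rw [Real.rpow_sub_one (hR0 x).ne']; field_simp [(hR0 x).ne']
  have hco := coer_aux (a := pd 0 (W 0) x) (b := pd 1 (W 0) x) (c := pd 0 (W 1) x)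
    (d := pd 1 (W 1) x) hμ hμν hh hg1
  have hco0 : 0 ≤ 3 / 4 * μ * H x * (pd 0 (W 0) x ^ 2 + pd 1 (W 0) x ^ 2 + pd 0 (W 1) x ^ 2
    + pd 1 (W 1) x ^ 2) := by positivity
  have hpt2 : 0 ≤ pt * (W 0 x * W 0 x + W 1 x * W 1 x) :=
    mul_nonneg hpt (add_nonneg (mul_self_nonneg _) (mul_self_nonneg _))
  have w0 := hWU 0
  have w1 := hWU 1
  have hrt : γ * R x ^ (γ - 1) * rt / (γ - 1) =
      (U 0 x * pd 0 (fun y => R y ^ γ) x + U 1 x * pd 1 (fun y => R y ^ γ) x)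
      - (γ / (γ - 1)) * (pd 0 (fun y => R y ^ γ) x * U 0 x + R x ^ γ * pd 0 (U 0) x)
      - (γ / (γ - 1)) * (pd 1 (fun y => R y ^ γ) x * U 1 x + R x ^ γ * pd 1 (U 1) x) := by
    simp only [Fin.sum_univ_two, pd_mul hR (hU 0), pd_mul hR (hU 1)] at hcont
    have hg : γ - 1 ≠ 0 := by linarith
    rw [hpg 0, hpg 1, hRR]
    field_simp
    linear_combination R x ^ (γ - 1) * hcont
  rw [hb, hrt]
  simp only [Fin.sum_univ_two, hF]
  simp only [stress, if_true, if_neg (by decide : ¬ ((0 : Fin 2) = 1)),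
    if_neg (by decide : ¬ ((1 : Fin 2) = 0)), zero_mul, add_zero, Real.rpow_zero, one_mul]
  clear * - hco hco0 hpt2 w0 w1
  linarith

end slice

lemma stress_periodic {ν μ : ℝ} {H G : (Fin 2 → ℝ) → ℝ} {W : Fin 2 → (Fin 2 → ℝ) → ℝ}
    (hH : SpacePeriodic H) (hG : SpacePeriodic G) (hW : ∀ i, SpacePeriodic (W i)) (i j : Fin 2) :
    SpacePeriodic (stress ν μ H G W i j) := by
  intro x n
  have e : ∀ i j, pd j (W i) (x + fun i => (n i : ℝ)) = pd j (W i) x :=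
    fun i j => pd_periodic (hW i) j x n
  unfold stress
  rw [hH x n, hG x n, e, e, e, e]

lemma Nf_periodic {W : Fin 2 → (Fin 2 → ℝ) → ℝ} (hW : ∀ i, SpacePeriodic (W i)) :
    SpacePeriodic (Nf W) := by
  intro x n
  unfold Nf
  rw [hW 0 x n, hW 1 x n]

lemma Fb_periodic {δ : ℝ} {R : (Fin 2 → ℝ) → ℝ} {U W : Fin 2 → (Fin 2 → ℝ) → ℝ}
    {S : Fin 2 → Fin 2 → (Fin 2 → ℝ) → ℝ} (hR : SpacePeriodic R)
    (hU : ∀ i, SpacePeriodic (U i)) (hW : ∀ i, SpacePeriodic (W i))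
    (hS : ∀ i j, SpacePeriodic (S i j)) (j : Fin 2) : SpacePeriodic (Fb δ R U W S j) := by
  intro x n
  unfold Fb Psi
  rw [hW 0 x n, hW 1 x n, Nf_periodic hW x n, hS 0 j x n, hS 1 j x n, hR x n, hU j x n]

section sol2
variable {ε γ ν κ T : ℝ} {P Φ : ℝ → ℝ} {ρ : ℝ → (Fin 2 → ℝ) → ℝ}
  {u w : ℝ → (Fin 2 → ℝ) → (Fin 2 → ℝ)}

lemma w_periodic (h : IsQNSSol 2 ε γ ν κ T P ρ u)
    (hw : ∀ s y i, w s y i = u s y i + muof ν κ * grad (fun z => Φ (ρ s z)) y i) (t : ℝ)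
    (i : Fin 2) : SpacePeriodic (fun y => w t y i) := by
  intro x n
  have h1 : SpacePeriodic (fun z => Φ (ρ t z)) := by
    intro y m
    show Φ (ρ t _) = Φ (ρ t y)
    rw [h.2.2.2.1 t y m]
  have h2 := pd_periodic h1 i x n
  have h3 := h.2.2.2.2.1 t x n
  show w t _ i = w t x i
  rw [hw, hw, h3]
  unfold grad
  exact congrArg (fun z => u t x i + muof ν κ * z) h2

lemma sts_psi (hW : ∀ i, STS T (fun s y => w s y i)) (δ : ℝ) :
    STS T (fun s y => Psi δ (fun i y => w s y i) y) := by
  have h1 : STS T (fun s y => Nf (fun i y => w s y i) y) :=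
    (STS.const 1).add (((hW 0).mul (hW 0)).add ((hW 1).mul (hW 1)))
  have h2 := h1.rpow (fun s y => Nf_pos _ y) (1 + δ)
  exact ContDiffOn.div_const h2 _

lemma psi_deriv (hW : ∀ i, STS T (fun s y => w s y i)) {δ : ℝ} (hδ : 0 ≤ δ) {t : ℝ}
    (ht : t ∈ Set.Ioo 0 T) (x : Fin 2 → ℝ) :
    HasDerivAt (fun s => Psi δ (fun i y => w s y i) x)
      (Nf (fun i y => w t y i) x ^ δ * (w t x 0 * deriv (fun s => w s x 0) t
        + w t x 1 * deriv (fun s => w s x 1) t)) t := by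
  have h0 := (hW 0).hasDerivAt ht x
  have h1 := (hW 1).hasDerivAt ht x
  have hN : HasDerivAt (fun s => Nf (fun i y => w s y i) x) _ t :=
    ((h0.mul h0).add (h1.mul h1)).const_add 1
  have hp := Nf_pos (fun i y => w t y i) x
  have h2 := (hN.rpow_const (p := 1 + δ) (Or.inl hp.ne')).div_const (2 * (1 + δ))
  unfold Psi
  refine h2.congr_deriv ?_
  rw [add_sub_cancel_left]
  field_simp
  ring

lemma sm_G {R : (Fin 2 → ℝ) → ℝ} (hR : Sm R) (h0 : ∀ x, 0 < R x)
    (ε γ : ℝ) : Sm (fun y => gfun ε γ (R y)) :=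
  (hR.mul (sm_Q hR h0 ε γ)).sub (sm_H hR h0 ε γ)

lemma sm_stress {ν μ : ℝ} {H G : (Fin 2 → ℝ) → ℝ} {W : Fin 2 → (Fin 2 → ℝ) → ℝ}
    (hH : Sm H) (hG : Sm G) (hW : ∀ i, Sm (W i)) (i j : Fin 2) :
    Sm (stress ν μ H G W i j) :=
  (hH.mul (((Sm.const ν).mul ((hW i).pd j)).add ((Sm.const _).mul ((hW j).pd i)))).add
    ((Sm.const _).mul (hG.mul (((hW 0).pd 0).add ((hW 1).pd 1))))

lemma ptil_pos (ε : ℝ) {r : ℝ} (hr : 0 < r) : 0 < ptil ε r :=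
  mul_pos (Real.exp_pos _) (add_pos (Real.rpow_pos_of_pos hr _) (Real.rpow_pos_of_pos hr _))

lemma cont_eq (h : IsQNSSol 2 ε γ ν κ T P ρ u) {t : ℝ} (ht : t ∈ Set.Ioo 0 T) (x : Fin 2 → ℝ) :
    deriv (fun s => ρ s x) t + ∑ j, pd j (fun y => ρ t y * u t y j) x = 0 :=
  h.2.2.2.2.2.1 t ht x

lemma sol_delta (hκ : 0 < κ) (hνκ : κ < ν) (hγ : 1 < γ) (hε : 0 < ε) (hεγ : ε < 1 / γ) (hT : 0 < T)
    (h : IsQNSSol 2 ε γ ν κ T P ρ u) (hP : IsPeps ε γ ν κ P) (hΦ : IsPhieps ε γ Φ)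
    (hw : ∀ s y i, w s y i = u s y i + muof ν κ * grad (fun z => Φ (ρ s z)) y i)
    {δ : ℝ} (hδ : 0 ≤ δ) (hδ2 : δ * (192 * ν * γ) ≤ muof ν κ) {t : ℝ} (ht : t ∈ Set.Ioo 0 T) :
    ∃ F : Fin 2 → (Fin 2 → ℝ) → ℝ, (∀ j, Sm (F j)) ∧ (∀ j, SpacePeriodic (F j)) ∧
      ∀ x, deriv (fun s => ρ s x * Psi δ (fun i y => w s y i) x) t ≤ ∑ j, pd j (F j) x +
        18 / (muof ν κ * ε) * (1 + 18 / (muof ν κ * ε) / lamfun ε) ^ δ * ρ t x ^ γ := by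
  obtain ⟨-, hμ, hμν⟩ := muof_eq hκ hνκ
  have htI := Set.Ioo_subset_Icc_self ht
  have hR : Sm (ρ t) := h.stsR.sm htI
  have hR0 : ∀ y, 0 < ρ t y := h.2.2.1 t
  have hU : ∀ i, Sm (fun y => u t y i) := fun i => (h.stsU i).sm htI
  have hWs := w_sts hT h hΦ hw
  have hW : ∀ i, Sm (fun y => w t y i) := fun i => (hWs i).sm htI
  have hS : ∀ i j, Sm (stress ν (muof ν κ) (fun y => hfun ε γ (ρ t y))
      (fun y => gfun ε γ (ρ t y)) (fun k y => w t y k) i j) :=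
    fun i j => sm_stress (W := fun k y => w t y k) (sm_H hR hR0 ε γ) (sm_G hR hR0 ε γ) hW i j
  have pR : SpacePeriodic (ρ t) := h.2.2.2.1 t
  have pU : ∀ i, SpacePeriodic (fun y => u t y i) := fun i x n =>
    congrFun (h.2.2.2.2.1 t x n) i
  have pW : ∀ i, SpacePeriodic (fun y => w t y i) := w_periodic h hw t
  have pS : ∀ i j, SpacePeriodic (stress ν (muof ν κ) (fun y => hfun ε γ (ρ t y))
      (fun y => gfun ε γ (ρ t y)) (fun k y => w t y k) i j) := fun i j =>
    stress_periodic (fun x n => congrArg (hfun ε γ) (pR x n))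
      (fun x n => congrArg (gfun ε γ) (pR x n)) pW i j
  refine ⟨fun j y => Fb δ (ρ t) (fun i y => u t y i) (fun i y => w t y i)
    (stress ν (muof ν κ) (fun y => hfun ε γ (ρ t y))
      (fun y => gfun ε γ (ρ t y)) (fun k y => w t y k)) j y
      - ρ t y ^ γ * (Nf (fun i y => w t y i) y ^ δ * w t y j), ?_, ?_, ?_⟩
  · intro j
    exact (sm_Fb (W := fun i y => w t y i) (U := fun i y => u t y i) δ hR hU hW hS j).sub
      ((hR.rpow hR0 γ).mul ((sm_Nfpow (W := fun i y => w t y i) hW δ).mul (hW j)))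
  · intro j x n
    have e1 := Fb_periodic (δ := δ) (W := fun i y => w t y i) (U := fun i y => u t y i)
      pR pU pW pS j x n
    have e2 := Nf_periodic (W := fun i y => w t y i) pW x n
    have e3 : w t (x + fun i => (n i : ℝ)) j = w t x j := pW j x n
    simp only
    rw [e1, e2, e3, pR x n]
  · intro x
    obtain ⟨g1, g2, g3, g4⟩ := gfun_bounds hε hγ (hR0 x)
    have hd := ((h.stsR.hasDerivAt ht x).mul (psi_deriv hWs hδ ht x)).deriv
    have hd' : deriv (fun s => ρ s x * Psi δ (fun i y => w s y i) x) t = _ := hd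
    rw [hd']
    have key := delta_ineq (W := fun i y => w t y i) (U := fun i y => u t y i) hR hR0 hU hW hS x
      (deriv (fun s => ρ s x) t) (ptil ε (ρ t x)) (fun i => deriv (fun s => w s x i) t)
      (cont_eq h ht x) (fun i => w_eq hκ hνκ h hP hΦ hw ht x i) hμ hμν hγ g1 g2 g3 hδ hδ2
    refine key.trans (add_le_add le_rfl ?_)
    have hM : 0 ≤ 18 / (muof ν κ * ε) := by positivity
    have hda := damping (s := w t x 0 * w t x 0 + w t x 1 * w t x 1) hε hγ hεγ (hR0 x) hM
      (add_nonneg (mul_self_nonneg _) (mul_self_nonneg _)) hδ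
    refine le_trans ?_ hda
    have hrg : 0 < ρ t x ^ γ := Real.rpow_pos_of_pos (hR0 x) _
    refine mul_le_mul_of_nonneg_left (sub_le_sub_right ?_ _)
      (Real.rpow_nonneg (Nf_pos (fun i y => w t y i) x).le δ)
    have e5 : (ρ t x ^ γ) ^ 2 / hfun ε γ (ρ t x) ≤ ρ t x ^ γ / ε := by
      rw [div_le_div_iff₀ g1 hε]
      nlinarith [mul_le_mul_of_nonneg_left g4 hrg.le]
    calc 18 / muof ν κ * ((ρ t x ^ γ) ^ 2 / hfun ε γ (ρ t x))
        ≤ 18 / muof ν κ * (ρ t x ^ γ / ε) := by gcongr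
      _ = _ := by field_simp

lemma sol_energy (hκ : 0 < κ) (hνκ : κ < ν) (hγ : 1 < γ) (hε : 0 < ε) (hT : 0 < T)
    (h : IsQNSSol 2 ε γ ν κ T P ρ u) (hP : IsPeps ε γ ν κ P) (hΦ : IsPhieps ε γ Φ)
    (hw : ∀ s y i, w s y i = u s y i + muof ν κ * grad (fun z => Φ (ρ s z)) y i)
    {t : ℝ} (ht : t ∈ Set.Ioo 0 T) :
    ∃ F : Fin 2 → (Fin 2 → ℝ) → ℝ, (∀ j, Sm (F j)) ∧ (∀ j, SpacePeriodic (F j)) ∧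
      ∀ x, deriv (fun s => ρ s x * Psi 0 (fun i y => w s y i) x + ρ s x ^ γ / (γ - 1)) t
        ≤ ∑ j, pd j (F j) x + 0 := by
  obtain ⟨-, hμ, hμν⟩ := muof_eq hκ hνκ
  have htI := Set.Ioo_subset_Icc_self ht
  have hR : Sm (ρ t) := h.stsR.sm htI
  have hR0 : ∀ y, 0 < ρ t y := h.2.2.1 t
  have hU : ∀ i, Sm (fun y => u t y i) := fun i => (h.stsU i).sm htI
  have hWs := w_sts hT h hΦ hw
  have hW : ∀ i, Sm (fun y => w t y i) := fun i => (hWs i).sm htI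
  have hS : ∀ i j, Sm (stress ν (muof ν κ) (fun y => hfun ε γ (ρ t y))
      (fun y => gfun ε γ (ρ t y)) (fun k y => w t y k) i j) :=
    fun i j => sm_stress (W := fun k y => w t y k) (sm_H hR hR0 ε γ) (sm_G hR hR0 ε γ) hW i j
  have pR : SpacePeriodic (ρ t) := h.2.2.2.1 t
  have pU : ∀ i, SpacePeriodic (fun y => u t y i) := fun i x n =>
    congrFun (h.2.2.2.2.1 t x n) i
  have pW : ∀ i, SpacePeriodic (fun y => w t y i) := w_periodic h hw t
  have pS : ∀ i j, SpacePeriodic (stress ν (muof ν κ) (fun y => hfun ε γ (ρ t y))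
      (fun y => gfun ε γ (ρ t y)) (fun k y => w t y k) i j) := fun i j =>
    stress_periodic (fun x n => congrArg (hfun ε γ) (pR x n))
      (fun x n => congrArg (gfun ε γ) (pR x n)) pW i j
  refine ⟨fun j y => Fb 0 (ρ t) (fun i y => u t y i) (fun i y => w t y i)
    (stress ν (muof ν κ) (fun y => hfun ε γ (ρ t y))
      (fun y => gfun ε γ (ρ t y)) (fun k y => w t y k)) j y
      - (γ / (γ - 1)) * (ρ t y ^ γ * u t y j), ?_, ?_, ?_⟩
  · intro j
    exact (sm_Fb (W := fun i y => w t y i) (U := fun i y => u t y i) 0 hR hU hW hS j).sub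
      ((Sm.const _).mul ((hR.rpow hR0 γ).mul (hU j)))
  · intro j x n
    have e1 := Fb_periodic (δ := 0) (W := fun i y => w t y i) (U := fun i y => u t y i)
      pR pU pW pS j x n
    have e3 : u t (x + fun i => (n i : ℝ)) j = u t x j := pU j x n
    simp only
    rw [e1, e3, pR x n]
  · intro x
    obtain ⟨g1, g2, g3, g4⟩ := gfun_bounds hε hγ (hR0 x)
    have hdr := h.stsR.hasDerivAt ht x
    have hd := ((hdr.mul (psi_deriv hWs le_rfl ht x)).add
      ((hdr.rpow_const (p := γ) (Or.inl (hR0 x).ne')).div_const (γ - 1))).deriv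
    have hd' : deriv (fun s => ρ s x * Psi 0 (fun i y => w s y i) x
      + ρ s x ^ γ / (γ - 1)) t = _ := hd
    rw [hd', add_zero]
    have hWU : ∀ i, 0 ≤ (w t x i - u t x i) * pd i (fun y => ρ t y ^ γ) x := by
      intro i
      have e1 : w t x i - u t x i = muof ν κ * pd i (fun z => Φ (ρ t z)) x := by
        rw [hw]; unfold grad; ring
      have e2 := pd_Phi hR hR0 hΦ i x
      rw [deriv_hfun ε γ (hR0 x)] at e2
      have e3 : pd i (fun y => ρ t y ^ γ) x = γ * ρ t x ^ (γ - 1) * pd i (ρ t) x :=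
        pd_comp (G := fun r => r ^ γ) x (Real.hasDerivAt_rpow_const (Or.inl (hR0 x).ne')) hR i
      have hr := hR0 x
      have hq : 0 < qf ε γ (ρ t x) := by
        unfold qf
        have k1 := Real.rpow_pos_of_pos hr ((7 : ℝ) / 8 - 1)
        have k2 := Real.rpow_pos_of_pos hr (γ - 1)
        positivity
      have e4 : pd i (fun z => Φ (ρ t z)) x = qf ε γ (ρ t x) * pd i (ρ t) x / ρ t x := by
        rw [eq_div_iff hr.ne', ← e2]; ring
      have k2 := Real.rpow_pos_of_pos hr (γ - 1)
      rw [e1, e3, e4]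
      have : muof ν κ * (qf ε γ (ρ t x) * pd i (ρ t) x / ρ t x) *
        (γ * ρ t x ^ (γ - 1) * pd i (ρ t) x) = muof ν κ * qf ε γ (ρ t x) * γ * ρ t x ^ (γ - 1)
          / ρ t x * (pd i (ρ t) x) ^ 2 := by ring
      rw [this]
      positivity
    have key := energy_ineq (W := fun i y => w t y i) (U := fun i y => u t y i) hR hR0 hU hW hS x
      (deriv (fun s => ρ s x) t) (ptil ε (ρ t x)) (fun i => deriv (fun s => w s x i) t)
      (cont_eq h ht x) (fun i => w_eq hκ hνκ h hP hΦ hw ht x i) hμ hμν hγ g1 g2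
      (ptil_pos ε (hR0 x)).le hWU
    refine le_trans (le_of_eq ?_) key
    ring

lemma Psi_nonneg {δ : ℝ} (hδ : 0 ≤ δ) (W : Fin 2 → (Fin 2 → ℝ) → ℝ) (y : Fin 2 → ℝ) :
    0 ≤ Psi δ W y := by
  unfold Psi
  have := Real.rpow_pos_of_pos (Nf_pos W y) (1 + δ)
  positivity

lemma final_bound (hκ : 0 < κ) (hνκ : κ < ν) (hγ : 1 < γ) (hε : 0 < ε) (hεγ : ε < 1 / γ)
    (hT : 0 < T)
    (h : IsQNSSol 2 ε γ ν κ T P ρ u) (hP : IsPeps ε γ ν κ P) (hΦ : IsPhieps ε γ Φ)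
    (hw : ∀ s y i, w s y i = u s y i + muof ν κ * grad (fun z => Φ (ρ s z)) y i)
    {δ : ℝ} (hδ : 0 ≤ δ) (hδ2 : δ * (192 * ν * γ) ≤ muof ν κ) {t : ℝ} (ht : t ∈ Set.Ioo 0 T) :
    (∫ x in unitBox 2, ρ t x * (∑ i, w t x i ^ 2) ^ (1 + δ)) ≤
      2 * (1 + δ) * ((∫ x in unitBox 2, ρ 0 x * Psi δ (fun i y => w 0 y i) x) +
        18 / (muof ν κ * ε) * (1 + 18 / (muof ν κ * ε) / lamfun ε) ^ δ * ((γ - 1) *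
        ∫ x in unitBox 2, (ρ 0 x * Psi 0 (fun i y => w 0 y i) x + ρ 0 x ^ γ / (γ - 1))) * T) := by
  obtain ⟨-, hμ, hμν⟩ := muof_eq hκ hνκ
  have hR0 := h.2.2.1
  have hWs := w_sts hT h hΦ hw
  have hg : 0 < γ - 1 := by linarith
  have st2 : STS T (fun s x => ρ s x * Psi 0 (fun i y => w s y i) x + ρ s x ^ γ / (γ - 1)) :=
    (h.stsR.mul (sts_psi hWs 0)).add (ContDiffOn.div_const (h.stsR.rpow hR0 γ) _)
  have stδ : STS T (fun s x => ρ s x * Psi δ (fun i y => w s y i) x) :=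
    h.stsR.mul (sts_psi hWs δ)
  have E1 := evol hT st2 (B := fun _ _ => 0) (K := 0) (fun _ _ => continuous_const)
    (fun _ _ => by simp) (fun t ht => sol_energy hκ hνκ hγ hε hT h hP hΦ hw ht)
  have hM : 0 ≤ 18 / (muof ν κ * ε) * (1 + 18 / (muof ν κ * ε) / lamfun ε) ^ δ := by
    have hl : 0 < lamfun ε := Real.exp_pos _
    positivity
  set M := 18 / (muof ν κ * ε) * (1 + 18 / (muof ν κ * ε) / lamfun ε) ^ δ with hMdef
  set K0 := (γ - 1) *
        ∫ x in unitBox 2, (ρ 0 x * Psi 0 (fun i y => w 0 y i) x + ρ 0 x ^ γ / (γ - 1)) with hK0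
  have smg : ∀ t ∈ Set.Icc 0 T, Continuous (fun x => ρ t x ^ γ) := fun t ht =>
    ((h.stsR.rpow hR0 γ).sm ht).cont
  have E2 : ∀ t ∈ Set.Icc 0 T, ∫ x in unitBox 2, ρ t x ^ γ ≤ K0 := by
    intro t ht
    have h1 := E1 t ht
    simp only [zero_mul, add_zero] at h1
    have h2 : ∫ x in unitBox 2, ρ t x ^ γ ≤ ∫ x in unitBox 2, (γ - 1) *
        (ρ t x * Psi 0 (fun i y => w t y i) x + ρ t x ^ γ / (γ - 1)) := by
      refine setIntegral_mono (int_cont (smg t ht))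
        (int_cont (continuous_const.mul (st2.sm ht).cont)) (fun x => ?_)
      have k := mul_nonneg hg.le (mul_nonneg (hR0 t x).le (Psi_nonneg le_rfl (fun i y => w t y i) x))
      have : (γ - 1) * (ρ t x ^ γ / (γ - 1)) = ρ t x ^ γ := by field_simp
      simp only [mul_add, this]
      linarith
    refine h2.trans ?_
    rw [integral_const_mul]
    exact mul_le_mul_of_nonneg_left h1 hg.le
  have E3 := evol hT stδ (B := fun t x => M * ρ t x ^ γ) (K := M * K0)
    (fun t ht => continuous_const.mul (smg t (Set.Ioo_subset_Icc_self ht)))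
    (fun t ht => by
      rw [integral_const_mul]
      exact mul_le_mul_of_nonneg_left (E2 t (Set.Ioo_subset_Icc_self ht)) hM)
    (fun t ht => sol_delta hκ hνκ hγ hε hεγ hT h hP hΦ hw hδ hδ2 ht)
  have htI := Set.Ioo_subset_Icc_self ht
  have hK0n : 0 ≤ K0 := le_trans
    (integral_nonneg (fun x => Real.rpow_nonneg (hR0 t x).le γ)) (E2 t htI)
  have E4 := E3 t htI
  have hδ1 : 0 < 2 * (1 + δ) := by linarith
  have hWt : ∀ i, Sm (fun y => w t y i) := fun i => (hWs i).sm htI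
  have E5 : (∫ x in unitBox 2, ρ t x * (∑ i, w t x i ^ 2) ^ (1 + δ)) ≤
      ∫ x in unitBox 2, 2 * (1 + δ) * (ρ t x * Psi δ (fun i y => w t y i) x) := by
    refine setIntegral_mono (int_cont ?_)
      (int_cont (continuous_const.mul (stδ.sm htI).cont)) (fun x => ?_)
    · refine (h.stsR.sm htI).cont.mul (Continuous.rpow_const ?_ (fun x => Or.inr (by linarith)))
      exact continuous_finsetSum _ (fun i _ => (hWt i).cont.pow 2)
    · simp only
      have e : 2 * (1 + δ) * (ρ t x * Psi δ (fun i y => w t y i) x) =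
          ρ t x * Nf (fun i y => w t y i) x ^ (1 + δ) := by
        unfold Psi; field_simp
      rw [e]
      refine mul_le_mul_of_nonneg_left (Real.rpow_le_rpow (Finset.sum_nonneg
        (fun i _ => sq_nonneg _)) ?_ (by linarith)) (hR0 t x).le
      rw [Fin.sum_univ_two]
      unfold Nf
      linarith
  refine E5.trans ?_
  rw [integral_const_mul]
  refine mul_le_mul_of_nonneg_left (E4.trans ?_) hδ1.le
  have := mul_le_mul_of_nonneg_left ht.2.le (mul_nonneg hM hK0n)
  linarith

end sol2

theorem statement16 (ν κ γ : ℝ) (hκ : 0 < κ) (hνκ : κ < ν) (hγ : 1 < γ) :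
    ∃ δbar : ℝ, 0 < δbar ∧ ∃ εf : ℝ, 0 < εf ∧
      ∀ δ : ℝ, 0 < δ → δ < δbar →
      ∀ ε : ℝ, 0 < ε → ε < εf →
      ∀ T : ℝ, 0 < T →
      ∀ (ρ0 : (Fin 2 → ℝ) → ℝ) (u0 : (Fin 2 → ℝ) → (Fin 2 → ℝ)),
        ContDiff ℝ (⊤ : ℕ∞) ρ0 → ContDiff ℝ (⊤ : ℕ∞) u0 →
        SpacePeriodic ρ0 → SpacePeriodic u0 → (∀ x, 0 < ρ0 x) →
      ∃ C : ℝ,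
        ∀ P Φ : ℝ → ℝ, IsPeps ε γ ν κ P → IsPhieps ε γ Φ →
        ∀ (ρ : ℝ → (Fin 2 → ℝ) → ℝ) (u : ℝ → (Fin 2 → ℝ) → (Fin 2 → ℝ)),
          IsQNSSol 2 ε γ ν κ T P ρ u → (∀ x, ρ 0 x = ρ0 x) → (∀ x, u 0 x = u0 x) →
        ∀ w : ℝ → (Fin 2 → ℝ) → (Fin 2 → ℝ),
          (∀ s y i, w s y i = u s y i + muof ν κ * grad (fun z => Φ (ρ s z)) y i) →
        ∀ t ∈ Set.Ioo 0 T,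
          (∫ x in unitBox 2, ρ t x * (∑ i, w t x i ^ 2) ^ (1 + δ)) ≤ C := by
  obtain ⟨-, hμ, hμν⟩ := muof_eq hκ hνκ
  have hν : 0 < ν := hκ.trans hνκ
  have hγ0 : 0 < γ := by linarith
  refine ⟨muof ν κ / (192 * ν * γ), by positivity, 1 / γ, by positivity, ?_⟩
  intro δ hδ hδb ε hε hεf T hT ρ0 u0 hρ0 _ _ _ hpos
  refine ⟨2 * (1 + δ) * ((∫ x in unitBox 2, ρ0 x * Psi δ (fun i y =>
        u0 y i + muof ν κ * (qf ε γ (ρ0 y) * pd i ρ0 y / ρ0 y)) x) +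
        18 / (muof ν κ * ε) * (1 + 18 / (muof ν κ * ε) / lamfun ε) ^ δ * ((γ - 1) *
        ∫ x in unitBox 2, (ρ0 x * Psi 0 (fun i y =>
        u0 y i + muof ν κ * (qf ε γ (ρ0 y) * pd i ρ0 y / ρ0 y)) x + ρ0 x ^ γ / (γ - 1))) * T), ?_⟩
  intro P Φ hP hΦ ρ u h hi1 hi2 w hw t ht
  have hδ2 : δ * (192 * ν * γ) ≤ muof ν κ := by
    rw [lt_div_iff₀ (by positivity)] at hδb
    exact hδb.le
  have key := final_bound hκ hνκ hγ hε hεf hT h hP hΦ hw hδ.le hδ2 ht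
  have r0 : ρ 0 = ρ0 := funext hi1
  have w0 : (fun i y => w 0 y i) = fun (i : Fin 2) y =>
      u0 y i + muof ν κ * (qf ε γ (ρ0 y) * pd i ρ0 y / ρ0 y) := by
    funext i y
    rw [hw, hi2]
    unfold grad
    have e2 := pd_Phi hρ0 hpos hΦ i y
    rw [deriv_hfun ε γ (hpos y)] at e2
    rw [r0, ← e2, mul_div_cancel_left₀ _ (hpos y).ne']
  rw [r0, w0] at key
  exact key

end
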